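/- Let A ⊆ 𝔽_p with 0 ∉ A and |A|^{11}·|A+A| ≤ p^8. Then the third multiplicative energy E₃ˣ(A) = #{(a₁,a₂,a₃,a₁',a₂',a₃') ∈ A⁶ : a₁/a₁' = a₂/a₂' = a₃/a₃'} satisfies E₃ˣ(A) ≪ |A+A|^{15/4}·|A|^{−3/4}·log|A|. -/

import Mathlib

open Finset Pointwise

/-!
If `r m` is the number of representations of `m` as a quotient of two elements of `A`, the energy
is `∑ m, r m ^ 3`, so it is enough to bound, for each `t`, the number of `m` with `t ≤ r m`. For
such `m` and `e ∈ A - m • A`, the line `y = m * x + e` contains at least `t` points of the grid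
`(A + A) ×ˢ (A + A)`; on the other hand, for each `m` the lines `y = m * x + e` with `e ∈ A - m • A`
cover `A ×ˢ A`. Incidence bounds for lines and grids exploit the first fact when `A - m • A` is
large and the second when it is small.

For families of lines that are small compared with the field, the incidence bound comes from
Rudnev's bound for points and planes by the Cauchy–Schwarz inequality; for large families it is a
second moment computation. Rudnev's bound is in turn a statement about two families of lines in
`K³`, each parallel to a coordinate plane, where `K = F(T)`. Some polynomial of degree of the order
of the square root of the number of lines of the first family vanishes on all of them. A line of
the second family that meets more of them than this degree lies in the zero set, and an irreducible
factor which contains many such lines divides its own second derivative along the horizontal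
tangent direction, so its zero set is a bilinear surface. Such a surface contains only
lines that encode collinear points.
-/

open scoped Polynomial

section Derivatives

open MvPolynomial

variable {σ K : Type*} [Field K]

theorem derivation_algHom_apply [Fintype σ] {R B : Type*} [CommRing R] [CommRing B] [Algebra R B]
    (φ : MvPolynomial σ R →ₐ[R] B) (δ : Derivation R B B) (g : MvPolynomial σ R) :
    δ (φ g) = ∑ i, φ (pderiv i g) * δ (φ (X i)) := by
  classical
  induction g using MvPolynomial.induction_on with
  | C a => simp [← algebraMap_eq]
  | add p q hp hq => simp only [map_add, hp, hq, add_mul, sum_add_distrib]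
  | mul_X p j hp =>
    simp only [map_mul, Derivation.leibniz, hp, smul_eq_mul, pderiv_X, map_add, add_mul,
      sum_add_distrib, mul_sum]
    simp only [Pi.single_apply, apply_ite φ, map_one, map_zero, mul_ite, mul_one, mul_zero,
      ite_mul, zero_mul, mem_univ, if_true, sum_ite_eq, mul_assoc]

theorem pderiv_pderiv_comm {R : Type*} [CommRing R] (i j : σ) (f : MvPolynomial σ R) :
    pderiv i (pderiv j f) = pderiv j (pderiv i f) := by
  classical
  have h : ⁅pderiv (R := R) i, pderiv (R := R) j⁆ = 0 := by
    refine derivation_ext fun k => ?_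
    simp only [Derivation.commutator_apply, pderiv_X, Pi.single_apply, Derivation.zero_apply]
    split_ifs <;> simp
  simpa [Derivation.commutator_apply, sub_eq_zero] using congr($h f)

theorem totalDegree_pderiv_le {R : Type*} [CommSemiring R] (i : σ) (f : MvPolynomial σ R) :
    (pderiv i f).totalDegree ≤ f.totalDegree - 1 := by
  refine Finset.sup_le fun m hm => ?_
  rw [mem_support_iff, coeff_pderiv] at hm
  have hdeg := le_totalDegree (mem_support_iff.2 (left_ne_zero_of_mul hm))
  rw [Finsupp.sum_add_index' (by simp) (by simp), Finsupp.sum_single_index rfl] at hdeg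
  omega

theorem totalDegree_pos_of_irreducible {f : MvPolynomial σ K} (hf : Irreducible f) :
    0 < f.totalDegree := by
  refine Nat.pos_of_ne_zero fun h => ?_
  rw [totalDegree_eq_zero_iff_eq_C] at h
  have hcoeff : coeff 0 f ≠ 0 := fun h0 => hf.ne_zero (by rw [h, h0, C_0])
  exact hf.not_isUnit (h ▸ (IsUnit.mk0 _ hcoeff).map C)

theorem not_dvd_pderiv {i : σ} {f : MvPolynomial σ K} (h : pderiv i f ≠ 0) :
    ¬ f ∣ pderiv i f := by
  intro hdvd
  have hle := totalDegree_le_of_dvd_of_isDomain hdvd h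
  have hlt := totalDegree_pderiv_le i f
  have hconst : f.totalDegree = 0 := by omega
  rw [totalDegree_eq_zero_iff_eq_C] at hconst
  exact h (by rw [hconst, pderiv_C])

theorem degreeOf_ne_zero_of_pderiv_ne_zero {i : σ} {f : MvPolynomial σ K} (h : pderiv i f ≠ 0) :
    f.degreeOf i ≠ 0 := by
  classical
  refine fun h0 => h (pderiv_eq_zero_of_notMem_vars ?_)
  rwa [degreeOf_def, Multiset.count_eq_zero, ← Multiset.mem_toFinset] at h0

theorem notMem_vars_of_pderiv_eq_zero {p : ℕ} [CharP K p] {i : σ} {f : MvPolynomial σ K}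
    (hdeg : f.totalDegree < p) (h : pderiv i f = 0) : i ∉ f.vars := by
  rw [mem_vars_iff_mem_support]
  rintro ⟨m, hm, hi⟩
  rw [Finsupp.mem_support_iff] at hi
  have hcoeff := congrArg (coeff (m - Finsupp.single i 1)) h
  rw [coeff_pderiv, tsub_add_cancel_of_le (Finsupp.single_le_iff.2 (Nat.pos_of_ne_zero hi)),
    coeff_zero, Finsupp.tsub_apply, Finsupp.single_eq_same, ← Nat.cast_add_one,
    Nat.sub_add_cancel (Nat.pos_of_ne_zero hi)] at hcoeff
  have hdvd := (CharP.cast_eq_zero_iff K p _).1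
    ((mul_eq_zero.1 hcoeff).resolve_left (mem_support_iff.1 hm))
  have hle : m i ≤ f.totalDegree := (monomial_le_degreeOf i hm).trans (degreeOf_le_totalDegree f i)
  exact absurd (Nat.le_of_dvd (Nat.pos_of_ne_zero hi) hdvd) (by omega)

end Derivatives

section Elimination

open MvPolynomial

theorem totalDegree_det_le {σ R : Type*} [CommRing R] {m n d e : ℕ}
    (M : Matrix (Fin (m + n)) (Fin (m + n)) (MvPolynomial σ R))
    (hleft : ∀ i, ∀ j : Fin m, (M i (Fin.castAdd n j)).totalDegree ≤ e)
    (hright : ∀ i, ∀ j : Fin n, (M i (Fin.natAdd m j)).totalDegree ≤ d) :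
    M.det.totalDegree ≤ m * e + n * d := by
  rw [Matrix.det_apply]
  refine totalDegree_finsetSum_le fun τ _ => ?_
  have hsign : (Equiv.Perm.sign τ • ∏ i, M (τ i) i).totalDegree ≤
      (∏ i, M (τ i) i).totalDegree := by
    rcases Int.units_eq_one_or (Equiv.Perm.sign τ) with h | h <;> simp [h]
  refine hsign.trans ((totalDegree_finsetProd _ _).trans ?_)
  rw [Fin.sum_univ_add]
  refine add_le_add ((sum_le_sum fun j _ => hleft _ j).trans ?_)
    ((sum_le_sum fun j _ => hright _ j).trans ?_) <;> simp

theorem totalDegree_resultant_le {σ R : Type*} [CommRing R] {F G : (MvPolynomial σ R)[X]}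
    {m n d e : ℕ} (hF : ∀ k, (F.coeff k).totalDegree ≤ d)
    (hG : ∀ k, (G.coeff k).totalDegree ≤ e) :
    (F.resultant G m n).totalDegree ≤ m * e + n * d := by
  refine totalDegree_det_le _ (fun i j => ?_) fun i j => ?_ <;>
  · simp only [Polynomial.sylvester, Matrix.of_apply, Fin.addCases_left, Fin.addCases_right]
    split_ifs <;> simp [hF, hG]

theorem resultant_ne_zero_of_irreducible {R : Type*} [CommRing R] [IsDomain R] [IsGCDMonoid R]
    {F G : R[X]} (hF : Irreducible F) (hdeg : F.natDegree ≠ 0) (hFG : ¬ F ∣ G) :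
    F.resultant G ≠ 0 := by
  intro h0
  have hinj : Function.Injective (algebraMap R (FractionRing R)) := IsFractionRing.injective _ _
  have hprim := hF.isPrimitive hdeg
  have hmap := Polynomial.resultant_map_map F G F.natDegree G.natDegree
    (algebraMap R (FractionRing R))
  rw [h0, map_zero, ← Polynomial.natDegree_map_eq_of_injective hinj F,
    ← Polynomial.natDegree_map_eq_of_injective hinj G, Polynomial.resultant_eq_zero_iff] at hmap
  have hirr := (hprim.irreducible_iff_irreducible_map_fraction_map (K := FractionRing R)).1 hF
  exact hFG (hprim.dvd_of_fraction_map_dvd_fraction_map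
    (not_not.1 fun hndvd => hmap.2 (hirr.coprime_iff_not_dvd.2 hndvd)))

variable {K : Type*} [Field K] {n : ℕ}

theorem finSuccEquiv_rename_succ (R : MvPolynomial (Fin n) K) :
    finSuccEquiv K n (rename Fin.succ R) = Polynomial.C R := by
  have h : (finSuccEquiv K n : MvPolynomial (Fin (n + 1)) K →ₐ[K] _).comp (rename Fin.succ) =
      Polynomial.CAlgHom := algHom_ext fun i => by simp [finSuccEquiv_X_succ]
  exact congr($h R)

theorem totalDegree_coeff_finSuccEquiv_le (f : MvPolynomial (Fin (n + 1)) K) (k : ℕ) :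
    ((finSuccEquiv K n f).coeff k).totalDegree ≤ f.totalDegree := by
  by_cases h : (finSuccEquiv K n f).coeff k = 0
  · simp [h]
  · exact (Nat.le_add_right _ _).trans (totalDegree_coeff_finSuccEquiv_add_le f k h)

theorem exists_eliminant {f g : MvPolynomial (Fin (n + 1)) K} (hf : Irreducible f)
    (hdeg : f.degreeOf 0 ≠ 0) (hfg : ¬ f ∣ g) :
    ∃ R : MvPolynomial (Fin n) K, R ≠ 0 ∧
      R.totalDegree ≤ 2 * f.totalDegree * g.totalDegree ∧
      rename Fin.succ R ∈ Ideal.span {f, g} := by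
  let e := finSuccEquiv K n
  have hdegf : (e f).natDegree ≠ 0 := by rwa [natDegree_finSuccEquiv]
  refine ⟨(e f).resultant (e g), resultant_ne_zero_of_irreducible
    ((MulEquiv.irreducible_iff e).2 hf) hdegf fun h => hfg ((map_dvd_iff e).1 h), ?_, ?_⟩
  · have hres := totalDegree_resultant_le (m := (e f).natDegree) (n := (e g).natDegree)
      (totalDegree_coeff_finSuccEquiv_le f) (totalDegree_coeff_finSuccEquiv_le g)
    have hf0 : (e f).natDegree ≤ f.totalDegree :=
      (natDegree_finSuccEquiv f).trans_le (degreeOf_le_totalDegree _ _)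
    have hg0 : (e g).natDegree ≤ g.totalDegree :=
      (natDegree_finSuccEquiv g).trans_le (degreeOf_le_totalDegree _ _)
    calc _ ≤ _ := hres
      _ ≤ f.totalDegree * g.totalDegree + g.totalDegree * f.totalDegree := by gcongr
      _ = _ := by ring
  · obtain ⟨u, v, -, -, huv⟩ := Polynomial.exists_mul_add_mul_eq_C_resultant (e f) (e g) le_rfl
      le_rfl (Or.inl hdegf)
    refine Ideal.mem_span_pair.2 ⟨e.symm u, e.symm v, e.injective ?_⟩
    rw [finSuccEquiv_rename_succ, ← huv]
    simp [mul_comm]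

theorem card_le_totalDegree_of_aeval_C_X_eq_zero {R : MvPolynomial (Fin 2) K} (hR : R ≠ 0)
    {Y : Finset K} (h : ∀ y ∈ Y, aeval ![Polynomial.C y, (Polynomial.X : K[X])] R = 0) :
    #Y ≤ R.totalDegree := by
  classical
  have hroot : ∀ y ∈ Y, (finSuccEquiv K 1 R).eval (C y) = 0 := fun y hy => by
    have hcomp : ((Polynomial.aeval (C y : MvPolynomial (Fin 1) K)).restrictScalars K).comp
        (finSuccEquiv K 1 : MvPolynomial (Fin 2) K →ₐ[K] (MvPolynomial (Fin 1) K)[X]) =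
        (Polynomial.aeval (X 0)).comp (aeval ![Polynomial.C y, Polynomial.X]) := by
      refine algHom_ext fun i => ?_
      fin_cases i
      · simp [finSuccEquiv_X_zero, algebraMap_eq]
      · have hX : finSuccEquiv K 1 (X 1) = Polynomial.C (X 0) := finSuccEquiv_X_succ (j := 0)
        simp [hX]
    simpa [h y hy, Polynomial.coe_aeval_eq_eval] using congr($hcomp R)
  rw [← card_image_of_injective Y (C_injective (Fin 1) K)]
  refine (Polynomial.card_le_degree_of_subset_roots (p := finSuccEquiv K 1 R) ?_).trans
    ((natDegree_finSuccEquiv R).trans_le (degreeOf_le_totalDegree _ _))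
  intro t ht
  obtain ⟨y, hy, rfl⟩ := mem_image.1 ht
  exact (Polynomial.mem_roots (by simpa using hR)).2 (hroot y hy)

theorem eq_zero_of_aeval_C_add_X_mul_C_eq_zero {b : K[X]} (hb : b ≠ 0) (y : K)
    {R : MvPolynomial (Fin 2) K}
    (h : aeval ![Polynomial.C (Polynomial.C y) + Polynomial.X * Polynomial.C b,
      (Polynomial.C Polynomial.X : K[X][X])] R = 0) : R = 0 := by
  let e : MvPolynomial (Fin 2) K ≃ₐ[K] K[X][X] :=
    (renameEquiv K (Equiv.swap 0 1)).trans (Polynomial.Bivariate.equivMvPolynomial K).symm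
  set q : K[X][X] := Polynomial.C (Polynomial.C y) + Polynomial.X * Polynomial.C b with hq
  have hcomp : ((Polynomial.aeval q).restrictScalars K).comp
      (e : MvPolynomial (Fin 2) K →ₐ[K] K[X][X]) = aeval ![q, Polynomial.C Polynomial.X] := by
    refine algHom_ext fun i => ?_
    fin_cases i <;> simp [e]
  have hzero : (e R).comp q = 0 := by
    simpa [h, Polynomial.comp_eq_aeval] using congr($hcomp R)
  rcases Polynomial.comp_eq_zero_iff.1 hzero with h0 | ⟨-, hconst⟩
  · simpa using h0
  · have hcoeff := congrArg (Polynomial.coeff · 1) hconst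
    simp [hq, Polynomial.coeff_C, hb] at hcoeff

end Elimination

section Curves

open MvPolynomial

theorem natDegree_aeval_le_totalDegree {σ K A : Type*} [CommSemiring K] [CommSemiring A]
    [Algebra K A] {v : σ → A[X]} (hv : ∀ i, (v i).natDegree ≤ 1) (f : MvPolynomial σ K) :
    (aeval v f).natDegree ≤ f.totalDegree := by
  rw [aeval_def, eval₂_eq]
  refine Polynomial.natDegree_sum_le_of_forall_le _ _ fun m hm => ?_
  rw [IsScalarTower.algebraMap_apply K A A[X], ← Polynomial.C_eq_algebraMap]
  refine (Polynomial.natDegree_C_mul_le _ _).trans <| (Polynomial.natDegree_prod_le _ _).trans ?_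
  refine (sum_le_sum fun i _ => Polynomial.natDegree_pow_le.trans ?_).trans (le_totalDegree hm)
  simpa using Nat.mul_le_mul_left (m i) (hv i)

theorem natDegree_C_add_C_mul_X_le {R : Type*} [Semiring R] (a b : R) :
    (Polynomial.C a + Polynomial.C b * Polynomial.X).natDegree ≤ 1 :=
  add_comm (Polynomial.C a) _ ▸ Polynomial.natDegree_linear_le

theorem eval_aeval {σ K : Type*} [CommSemiring K] (v : σ → K[X]) (t : K) (f : MvPolynomial σ K) :
    (aeval v f).eval t = eval (fun i => (v i).eval t) f := by
  rw [← Polynomial.coe_evalRingHom, aeval_def, Polynomial.algebraMap_eq, hom_eval₂]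
  have hC : (Polynomial.evalRingHom t).comp Polynomial.C = RingHom.id K := by ext; simp
  rw [hC]
  rfl

end Curves

/-- A line in `K³`, with coordinates `(x, y, z)`, parallel to a coordinate plane. The same data
stand for the `y`-line `{(offset + slope * t, t, base)}` and for the `z`-line
`{(offset + slope * t, base, t)}`; each statement says which one it uses. -/
structure CoordLine (K : Type*) where
  base : K
  offset : K
  slope : K

namespace CoordLine

open MvPolynomial

variable {K : Type*} [Field K]

/-- Restriction of a polynomial to a `y`-line. -/
noncomputable def restrictY (ℓ : CoordLine K) : MvPolynomial (Fin 3) K →ₐ[K] K[X] :=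
  aeval ![Polynomial.C ℓ.offset + Polynomial.C ℓ.slope * Polynomial.X, Polynomial.X,
    Polynomial.C ℓ.base]

/-- Restriction of a polynomial to a `z`-line. -/
noncomputable def restrictZ (ℓ : CoordLine K) : MvPolynomial (Fin 3) K →ₐ[K] K[X] :=
  aeval ![Polynomial.C ℓ.offset + Polynomial.C ℓ.slope * Polynomial.X, Polynomial.C ℓ.base,
    Polynomial.X]

/-- The `y`-line `i` meets the `z`-line `j`. -/
def Meets (i j : CoordLine K) : Prop :=
  i.offset + i.slope * j.base = j.offset + j.slope * i.base

theorem natDegree_restrictY_le (i : CoordLine K) (f : MvPolynomial (Fin 3) K) :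
    (i.restrictY f).natDegree ≤ f.totalDegree :=
  natDegree_aeval_le_totalDegree (fun k => by
    fin_cases k <;> simp [natDegree_C_add_C_mul_X_le, -Polynomial.natDegree_C_add]) f

theorem natDegree_restrictZ_le (j : CoordLine K) (f : MvPolynomial (Fin 3) K) :
    (j.restrictZ f).natDegree ≤ f.totalDegree :=
  natDegree_aeval_le_totalDegree (fun k => by
    fin_cases k <;> simp [natDegree_C_add_C_mul_X_le, -Polynomial.natDegree_C_add]) f

theorem Meets.eval_restrict_eq {i j : CoordLine K} (h : i.Meets j) (f : MvPolynomial (Fin 3) K) :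
    (i.restrictY f).eval j.base = (j.restrictZ f).eval i.base := by
  rw [restrictY, restrictZ, eval_aeval, eval_aeval]
  have hpt : i.offset + i.slope * j.base = j.offset + j.slope * i.base := h
  congr 2
  ext k
  fin_cases k <;> simp [hpt]

theorem card_le_of_restrictZ_ne_zero {f : MvPolynomial (Fin 3) K} {j : CoordLine K}
    (hj : j.restrictZ f ≠ 0) {I : Finset (CoordLine K)}
    (hI : Set.InjOn base (I : Set (CoordLine K)))
    (h : ∀ i ∈ I, i.Meets j ∧ i.restrictY f = 0) : #I ≤ f.totalDegree := by
  classical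
  rw [← card_image_of_injOn hI]
  refine (Polynomial.card_le_degree_of_subset_roots fun t ht => ?_).trans
    (j.natDegree_restrictZ_le f)
  obtain ⟨i, hi, rfl⟩ := mem_image.1 ht
  rw [Polynomial.mem_roots hj, Polynomial.IsRoot, ← (h i hi).1.eval_restrict_eq, (h i hi).2,
    Polynomial.eval_zero]

theorem card_le_of_restrictY_ne_zero {f : MvPolynomial (Fin 3) K} {i : CoordLine K}
    (hi : i.restrictY f ≠ 0) {J : Finset (CoordLine K)}
    (hJ : Set.InjOn base (J : Set (CoordLine K)))
    (h : ∀ j ∈ J, i.Meets j ∧ j.restrictZ f = 0) : #J ≤ f.totalDegree := by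
  classical
  rw [← card_image_of_injOn hJ]
  refine (Polynomial.card_le_degree_of_subset_roots fun t ht => ?_).trans
    (i.natDegree_restrictY_le f)
  obtain ⟨j, hj, rfl⟩ := mem_image.1 ht
  rw [Polynomial.mem_roots hi, Polynomial.IsRoot, (h j hj).1.eval_restrict_eq, (h j hj).2,
    Polynomial.eval_zero]

theorem restrictZ_rename_succ (j : CoordLine K) (R : MvPolynomial (Fin 2) K) :
    j.restrictZ (rename Fin.succ R) = aeval ![Polynomial.C j.base, Polynomial.X] R := by
  rw [restrictZ, aeval_rename]
  congr 2

theorem card_le_totalDegree_of_restrictZ_rename {R : MvPolynomial (Fin 2) K} (hR : R ≠ 0)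
    {J : Finset (CoordLine K)} (hJ : Set.InjOn base (J : Set (CoordLine K)))
    (h : ∀ j ∈ J, j.restrictZ (rename Fin.succ R) = 0) :
    #J ≤ R.totalDegree := by
  classical
  rw [← card_image_of_injOn hJ]
  refine card_le_totalDegree_of_aeval_C_X_eq_zero hR fun y hy => ?_
  obtain ⟨j, hj, rfl⟩ := mem_image.1 hy
  rw [← restrictZ_rename_succ, h j hj]

theorem card_le_of_restrictZ_eq_zero {f g : MvPolynomial (Fin 3) K} (hf : Irreducible f)
    (hdeg : f.degreeOf 0 ≠ 0) (hfg : ¬ f ∣ g) {J : Finset (CoordLine K)}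
    (hJ : Set.InjOn base (J : Set (CoordLine K)))
    (h : ∀ j ∈ J, j.restrictZ f = 0 ∧ j.restrictZ g = 0) :
    #J ≤ 2 * f.totalDegree * g.totalDegree := by
  obtain ⟨R, hR, hRdeg, hRmem⟩ := exists_eliminant hf hdeg hfg
  obtain ⟨u, v, huv⟩ := Ideal.mem_span_pair.1 hRmem
  refine (card_le_totalDegree_of_restrictZ_rename hR hJ fun j hj => ?_).trans hRdeg
  rw [← huv, map_add, map_mul, map_mul, (h j hj).1, (h j hj).2, mul_zero, mul_zero, add_zero]

end CoordLine

section TangentFlow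

open MvPolynomial

/-- The extension of a derivation of `A` to `A[X]` which acts on the coefficients. -/
noncomputable def coeffwiseDerivation {R A : Type*} [CommRing R] [CommRing A] [Algebra R A]
    (D : Derivation R A A) : Derivation R A[X] A[X] :=
  PolynomialModule.equivPolynomialSelf.compDer D.mapCoeffs

section CoeffwiseDerivation

variable {R A : Type*} [CommRing R] [CommRing A] [Algebra R A] (D : Derivation R A A)

theorem coeff_coeffwiseDerivation (q : A[X]) (k : ℕ) :
    (coeffwiseDerivation D q).coeff k = D (q.coeff k) := rfl

theorem coeffwiseDerivation_C (a : A) :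
    coeffwiseDerivation D (Polynomial.C a) = Polynomial.C (D a) := by
  ext k
  rw [coeff_coeffwiseDerivation, Polynomial.coeff_C, Polynomial.coeff_C, apply_ite D, map_zero]

theorem coeffwiseDerivation_X : coeffwiseDerivation D Polynomial.X = 0 := by
  ext k
  rw [coeff_coeffwiseDerivation, Polynomial.coeff_X, apply_ite D, map_zero, D.map_one_eq_zero,
    ite_self, Polynomial.coeff_zero]

end CoeffwiseDerivation

variable {K : Type*} [Field K]

/-- Derivative along the horizontal vector field `(-∂f/∂y, ∂f/∂x, 0)`, tangent to `f = 0`. -/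
noncomputable def tangentDerivation (f : MvPolynomial (Fin 3) K) :
    Derivation K (MvPolynomial (Fin 3) K) (MvPolynomial (Fin 3) K) :=
  pderiv 0 f • pderiv 1 - pderiv 1 f • pderiv 0

/-- The Hessian of `f` evaluated twice on the horizontal tangent vector `(-∂f/∂y, ∂f/∂x, 0)`. It
vanishes along every horizontal line contained in `f = 0`. -/
noncomputable def tangentHessian (f : MvPolynomial (Fin 3) K) : MvPolynomial (Fin 3) K :=
  pderiv 1 (pderiv 1 f) * pderiv 0 f ^ 2 - 2 * pderiv 1 (pderiv 0 f) * pderiv 0 f * pderiv 1 f +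
    pderiv 0 (pderiv 0 f) * pderiv 1 f ^ 2

/-- `g ↦ g (x - t ∂f/∂y, y + t ∂f/∂x, z)`, as a polynomial in `t`. -/
noncomputable def tangentFlow (f : MvPolynomial (Fin 3) K) :
    MvPolynomial (Fin 3) K →ₐ[K] (MvPolynomial (Fin 3) K)[X] :=
  aeval ![Polynomial.C (X 0) - Polynomial.X * Polynomial.C (pderiv 1 f),
    Polynomial.C (X 1) + Polynomial.X * Polynomial.C (pderiv 0 f), Polynomial.C (X 2)]

variable (f g : MvPolynomial (Fin 3) K)

theorem tangentDerivation_apply :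
    tangentDerivation f g = pderiv 0 f * pderiv 1 g - pderiv 1 f * pderiv 0 g := rfl

theorem dvd_tangentDerivation {f g : MvPolynomial (Fin 3) K} (h : f ∣ g) :
    f ∣ tangentDerivation f g := by
  obtain ⟨q, rfl⟩ := h
  have hself : tangentDerivation f f = 0 := by rw [tangentDerivation_apply]; ring
  rw [Derivation.leibniz, hself, smul_zero, add_zero]
  exact dvd_mul_right f _

theorem pderiv_mul_tangentDerivation_pderiv :
    pderiv 0 f * tangentDerivation f (pderiv 1 f) =
      pderiv 1 f * tangentDerivation f (pderiv 0 f) + tangentHessian f := by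
  rw [tangentDerivation_apply, tangentDerivation_apply, tangentHessian, pderiv_pderiv_comm 0 1]
  ring

theorem totalDegree_tangentHessian_le : (tangentHessian f).totalDegree ≤ 3 * f.totalDegree := by
  have hderiv (i) (g : MvPolynomial (Fin 3) K) : (pderiv i g).totalDegree ≤ g.totalDegree :=
    (totalDegree_pderiv_le i g).trans (Nat.sub_le _ 1)
  have hderiv₂ (i j) : (pderiv i (pderiv j f)).totalDegree ≤ f.totalDegree :=
    (hderiv i _).trans (hderiv j f)
  have hmul {a b : MvPolynomial (Fin 3) K} {m n : ℕ} (ha : a.totalDegree ≤ m)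
      (hb : b.totalDegree ≤ n) : (a * b).totalDegree ≤ m + n :=
    (totalDegree_mul a b).trans (add_le_add ha hb)
  have htwo : (2 : MvPolynomial (Fin 3) K).totalDegree ≤ 0 := (totalDegree_C (2 : K)).le
  have hsq (i) : (pderiv i f ^ 2).totalDegree ≤ 2 * f.totalDegree :=
    (totalDegree_pow _ 2).trans (Nat.mul_le_mul_left 2 (hderiv i f))
  refine (totalDegree_add _ _).trans (max_le ((totalDegree_sub _ _).trans (max_le ?_ ?_)) ?_)
  · exact (hmul (hderiv₂ 1 1) (hsq 0)).trans (by omega)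
  · exact (hmul (hmul (hmul htwo (hderiv₂ 1 0)) (hderiv 0 f)) (hderiv 1 f)).trans (by omega)
  · exact (hmul (hderiv₂ 0 0) (hsq 1)).trans (by omega)

theorem derivative_tangentFlow :
    Polynomial.derivative (tangentFlow f g) =
      Polynomial.C (pderiv 0 f) * tangentFlow f (pderiv 1 g) -
        Polynomial.C (pderiv 1 f) * tangentFlow f (pderiv 0 g) := by
  have h := derivation_algHom_apply (tangentFlow f)
    ((Polynomial.derivative' (R := MvPolynomial (Fin 3) K)).restrictScalars K) g
  simp only [Derivation.restrictScalars_apply, Polynomial.derivative'_apply] at h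
  rw [h, Fin.sum_univ_three]
  simp [tangentFlow]
  ring

theorem coeffwiseDerivation_tangentFlow :
    coeffwiseDerivation (tangentDerivation f) (tangentFlow f g) =
      tangentFlow f (pderiv 1 g) * (Polynomial.C (pderiv 0 f) +
        Polynomial.X * Polynomial.C (tangentDerivation f (pderiv 0 f))) -
      tangentFlow f (pderiv 0 g) * (Polynomial.C (pderiv 1 f) +
        Polynomial.X * Polynomial.C (tangentDerivation f (pderiv 1 f))) := by
  rw [derivation_algHom_apply (tangentFlow f), Fin.sum_univ_three]
  simp [tangentFlow, coeffwiseDerivation_C, coeffwiseDerivation_X, Derivation.leibniz,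
    tangentDerivation_apply]
  ring

theorem coeff_zero_tangentFlow : (tangentFlow f g).coeff 0 = g := by
  have h : ((Polynomial.aeval (0 : MvPolynomial (Fin 3) K)).restrictScalars K).comp
      (tangentFlow f) = AlgHom.id K _ := by
    refine algHom_ext fun i => ?_
    fin_cases i <;> simp [tangentFlow]
  rw [Polynomial.coeff_zero_eq_aeval_zero]
  exact congr($h g)

theorem natDegree_tangentFlow_le : (tangentFlow f g).natDegree ≤ g.totalDegree := by
  refine natDegree_aeval_le_totalDegree (fun i => ?_) g
  fin_cases i
  · change (Polynomial.C (X 0) - Polynomial.X * Polynomial.C (pderiv 1 f)).natDegree ≤ 1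
    compute_degree
  · change (Polynomial.C (X 1) + Polynomial.X * Polynomial.C (pderiv 0 f)).natDegree ≤ 1
    compute_degree
  · exact (Polynomial.natDegree_C _).trans_le zero_le_one

theorem C_pderiv_mul_coeffwiseDerivation_tangentFlow_self :
    Polynomial.C (pderiv 0 f) * coeffwiseDerivation (tangentDerivation f) (tangentFlow f f) =
      Polynomial.derivative (tangentFlow f f) * (Polynomial.C (pderiv 0 f) +
        Polynomial.X * Polynomial.C (tangentDerivation f (pderiv 0 f))) -
      Polynomial.C (tangentHessian f) * (Polynomial.X * tangentFlow f (pderiv 0 f)) := by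
  have h := congrArg Polynomial.C (pderiv_mul_tangentDerivation_pderiv f)
  simp only [map_mul, map_add] at h
  rw [coeffwiseDerivation_tangentFlow, derivative_tangentFlow]
  linear_combination (-tangentFlow f (pderiv 0 f) * Polynomial.X) * h

end TangentFlow

section RuledSurface

open MvPolynomial

/-- The surface `x = const + coeffY * y + coeffZ * z + coeffYZ * y * z` in `K³`. -/
@[ext]
structure BilinearSurface (K : Type*) where
  const : K
  coeffY : K
  coeffZ : K
  coeffYZ : K

namespace BilinearSurface

variable {K : Type*} [Field K]

/-- The surface contains the `y`-line `i`. -/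
def ContainsY (S : BilinearSurface K) (i : CoordLine K) : Prop :=
  i.offset = S.const + S.coeffZ * i.base ∧ i.slope = S.coeffY + S.coeffYZ * i.base

/-- The surface contains the `z`-line `j`. -/
def ContainsZ (S : BilinearSurface K) (j : CoordLine K) : Prop :=
  j.offset = S.const + S.coeffY * j.base ∧ j.slope = S.coeffZ + S.coeffYZ * j.base

/-- The equation of the surface. -/
noncomputable def toPolynomial (S : BilinearSurface K) : MvPolynomial (Fin 3) K :=
  X 0 - (C S.const + C S.coeffY * X 1 + C S.coeffZ * X 2 + C S.coeffYZ * X 1 * X 2)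

theorem containsY_of_restrictY_toPolynomial {S : BilinearSurface K} {i : CoordLine K}
    (h : i.restrictY S.toPolynomial = 0) : S.ContainsY i := by
  have hlin : Polynomial.C (i.offset - (S.const + S.coeffZ * i.base)) +
      Polynomial.C (i.slope - (S.coeffY + S.coeffYZ * i.base)) * Polynomial.X = 0 := by
    rw [← h]
    simp only [toPolynomial, CoordLine.restrictY, map_sub, map_add, map_mul, aeval_X, algHom_C,
      Polynomial.algebraMap_eq, Matrix.cons_val]
    ring
  have hcoeff (k) := congrArg (Polynomial.coeff · k) hlin
  exact ⟨sub_eq_zero.1 (by simpa using hcoeff 0), sub_eq_zero.1 (by simpa using hcoeff 1)⟩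

end BilinearSurface

variable {K : Type*} [Field K]

section

variable {p : ℕ} [CharP K p] {f : MvPolynomial (Fin 3) K}

theorem natCast_dvd_iff_of_lt_char {n : ℕ} (h0 : n ≠ 0) (hn : n < p) {g : MvPolynomial (Fin 3) K} :
    f ∣ g * (n : MvPolynomial (Fin 3) K) ↔ f ∣ g := by
  have hne : (n : K) ≠ 0 := fun h =>
    h0 (Nat.eq_zero_of_dvd_of_lt ((CharP.cast_eq_zero_iff K p n).1 h) hn)
  have hunit := (IsUnit.mk0 _ hne).map (C (σ := Fin 3))
  rw [map_natCast] at hunit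
  exact hunit.dvd_mul_right

theorem dvd_pderiv_mul_coeff_succ_tangentFlow (hH : f ∣ tangentHessian f) {k : ℕ}
    (hk : f ∣ (tangentFlow f f).coeff k) :
    f ∣ pderiv 0 f *
      ((tangentFlow f f).coeff (k + 1) * ((k + 1 : ℕ) : MvPolynomial (Fin 3) K)) := by
  have h := congrArg (Polynomial.coeff · k) (C_pderiv_mul_coeffwiseDerivation_tangentFlow_self f)
  have hX : (Polynomial.derivative (tangentFlow f f) * Polynomial.X).coeff k =
      (tangentFlow f f).coeff k * k := by
    cases k with
    | zero => simp
    | succ k => simp [Polynomial.coeff_derivative]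
  simp only [mul_add, ← mul_assoc, Polynomial.coeff_sub, Polynomial.coeff_add,
    Polynomial.coeff_mul_C, hX, Polynomial.coeff_derivative] at h
  simp only [mul_assoc, Polynomial.coeff_C_mul, coeff_coeffwiseDerivation] at h
  have hsplit : pderiv 0 f *
      ((tangentFlow f f).coeff (k + 1) * ((k + 1 : ℕ) : MvPolynomial (Fin 3) K)) =
      pderiv 0 f * tangentDerivation f ((tangentFlow f f).coeff k) -
        (tangentFlow f f).coeff k * (k * tangentDerivation f (pderiv 0 f)) +
        tangentHessian f * (Polynomial.X * tangentFlow f (pderiv 0 f)).coeff k := by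
    push_cast
    linear_combination -h
  rw [hsplit]
  exact (((dvd_tangentDerivation hk).mul_left _).sub (hk.mul_right _)).add (hH.mul_right _)

-- If `f ∣ tangentHessian f`, the horizontal tangent lines of `f = 0` stay in the surface.
theorem C_dvd_tangentFlow_self (hf : Irreducible f) (hdeg : f.totalDegree < p)
    (hfx : pderiv 0 f ≠ 0) (hH : f ∣ tangentHessian f) :
    Polynomial.C f ∣ tangentFlow f f := by
  rw [Polynomial.C_dvd_iff_dvd_coeff]
  intro k
  induction k with
  | zero => rw [coeff_zero_tangentFlow]
  | succ k ih =>
    rcases lt_or_ge (tangentFlow f f).natDegree (k + 1) with hk | hk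
    · rw [Polynomial.coeff_eq_zero_of_natDegree_lt hk]
      exact dvd_zero _
    · have hkp : k + 1 < p := hk.trans_lt ((natDegree_tangentFlow_le f f).trans_lt hdeg)
      rw [← natCast_dvd_iff_of_lt_char k.succ_ne_zero hkp]
      exact (hf.prime.dvd_or_dvd (dvd_pderiv_mul_coeff_succ_tangentFlow hH ih)).resolve_left
        (not_dvd_pderiv hfx)

end

namespace CoordLine

/-- A polynomial in one variable, read as a polynomial in `z`. -/
noncomputable def liftZ : K[X] →ₐ[K] MvPolynomial (Fin 3) K := Polynomial.aeval (X 2)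

/-- Equation of the surface swept out by the horizontal tangent lines of `f = 0` at the points of
the `z`-line `j`. -/
noncomputable def tangentRuling (j : CoordLine K) (f : MvPolynomial (Fin 3) K) :
    MvPolynomial (Fin 3) K :=
  liftZ (j.restrictZ (pderiv 0 f)) * (X 0 - (C j.offset + C j.slope * X 2)) +
    (X 1 - C j.base) * liftZ (j.restrictZ (pderiv 1 f))

variable {f : MvPolynomial (Fin 3) K} {j j' : CoordLine K}

theorem restrictZ_liftZ (j : CoordLine K) (q : K[X]) : j.restrictZ (liftZ q) = q := by
  have h : j.restrictZ.comp liftZ = AlgHom.id K K[X] := by ext; simp [restrictZ, liftZ]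
  exact congr($h q)

theorem restrictZ_X (j : CoordLine K) (i : Fin 3) :
    j.restrictZ (X i) = ![Polynomial.C j.offset + Polynomial.C j.slope * Polynomial.X,
      Polynomial.C j.base, Polynomial.X] i :=
  aeval_X _ i

/-- Restriction of a polynomial to the horizontal tangent lines of `f = 0` at the points of the
`z`-line `j`; the outer variable runs along the tangent line, the inner one along `j`. -/
noncomputable def restrictTangent (j : CoordLine K) (f : MvPolynomial (Fin 3) K) :
    MvPolynomial (Fin 3) K →ₐ[K] K[X][X] :=
  (Polynomial.mapAlgHom j.restrictZ).comp (tangentFlow f)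

theorem restrictTangent_X (j : CoordLine K) (f : MvPolynomial (Fin 3) K) (i : Fin 3) :
    j.restrictTangent f (X i) =
      ![Polynomial.C (Polynomial.C j.offset + Polynomial.C j.slope * Polynomial.X) -
          Polynomial.X * Polynomial.C (j.restrictZ (pderiv 1 f)),
        Polynomial.C (Polynomial.C j.base) +
          Polynomial.X * Polynomial.C (j.restrictZ (pderiv 0 f)),
        Polynomial.C Polynomial.X] i := by
  fin_cases i <;> simp [restrictTangent, tangentFlow, restrictZ_X]

theorem restrictTangent_liftZ (j : CoordLine K) (f : MvPolynomial (Fin 3) K) (q : K[X]) :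
    j.restrictTangent f (liftZ q) = Polynomial.C q := by
  have h : (j.restrictTangent f).comp liftZ = Polynomial.CAlgHom := by
    ext1
    simp [liftZ, restrictTangent_X]
  exact congr($h q)

theorem restrictTangent_tangentRuling (j : CoordLine K) (f : MvPolynomial (Fin 3) K) :
    j.restrictTangent f (j.tangentRuling f) = 0 := by
  have hC (c : K) : j.restrictTangent f (C c) = Polynomial.C (Polynomial.C c) :=
    (j.restrictTangent f).commutes c
  simp only [tangentRuling, map_add, map_mul, map_sub, restrictTangent_liftZ, hC,
    restrictTangent_X, Matrix.cons_val]
  ring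

theorem eq_zero_of_restrictTangent_rename_succ (hfx : j.restrictZ (pderiv 0 f) ≠ 0)
    {R : MvPolynomial (Fin 2) K} (h : j.restrictTangent f (rename Fin.succ R) = 0) : R = 0 := by
  refine eq_zero_of_aeval_C_add_X_mul_C_eq_zero hfx j.base ?_
  have hcomp : (j.restrictTangent f).comp (rename Fin.succ) =
      aeval ![Polynomial.C (Polynomial.C j.base) +
        Polynomial.X * Polynomial.C (j.restrictZ (pderiv 0 f)),
        (Polynomial.C Polynomial.X : K[X][X])] := by
    refine algHom_ext fun i => ?_
    fin_cases i
    · simp only [AlgHom.comp_apply, rename_X, restrictTangent_X, aeval_X]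
      rfl
    · simp only [AlgHom.comp_apply, rename_X, restrictTangent_X, aeval_X]
      rfl
  rw [← hcomp, AlgHom.comp_apply, h]

theorem dvd_tangentRuling (hj : j.restrictZ f = 0) (hf : Irreducible f)
    (hfx : j.restrictZ (pderiv 0 f) ≠ 0) (hflow : Polynomial.C f ∣ tangentFlow f f) :
    f ∣ j.tangentRuling f := by
  have hself : j.restrictTangent f f = 0 := by
    obtain ⟨q, hq⟩ := hflow
    simp [restrictTangent, hq, hj]
  by_contra hndvd
  have hpderiv : pderiv 0 f ≠ 0 := fun h => hfx (by rw [h, map_zero])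
  obtain ⟨R, hR, -, hRmem⟩ :=
    exists_eliminant hf (degreeOf_ne_zero_of_pderiv_ne_zero hpderiv) hndvd
  obtain ⟨u, v, huv⟩ := Ideal.mem_span_pair.1 hRmem
  refine hR (eq_zero_of_restrictTangent_rename_succ hfx ?_)
  rw [← huv, map_add, map_mul, map_mul, hself, restrictTangent_tangentRuling, mul_zero, mul_zero,
    add_zero]

/-- For distinct bases, the bilinear surface containing both `z`-lines `j` and `j'`. -/
noncomputable def span (j j' : CoordLine K) : BilinearSurface K where
  const := j.offset - j.base * ((j'.offset - j.offset) / (j'.base - j.base))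
  coeffY := (j'.offset - j.offset) / (j'.base - j.base)
  coeffZ := j.slope - j.base * ((j'.slope - j.slope) / (j'.base - j.base))
  coeffYZ := (j'.slope - j.slope) / (j'.base - j.base)

theorem tangentRuling_eq_mul_span (hbase : j.base ≠ j'.base)
    (h : j'.restrictZ (j.tangentRuling f) = 0) :
    j.tangentRuling f = liftZ (j.restrictZ (pderiv 0 f)) * (j.span j').toPolynomial := by
  set a := j.restrictZ (pderiv 1 f) with ha
  set b := j.restrictZ (pderiv 0 f) with hb
  have hne : j'.base - j.base ≠ 0 := sub_ne_zero.2 hbase.symm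
  have hY : Polynomial.C (j'.base - j.base) * Polynomial.C (j.span j').coeffY =
      Polynomial.C (j'.offset - j.offset) := by
    rw [← map_mul, span, mul_div_cancel₀ _ hne]
  have hYZ : Polynomial.C (j'.base - j.base) * Polynomial.C (j.span j').coeffYZ =
      Polynomial.C (j'.slope - j.slope) := by
    rw [← map_mul, span, mul_div_cancel₀ _ hne]
  have hzero : b * (Polynomial.C (j'.offset - j.offset) +
      Polynomial.C (j'.slope - j.slope) * Polynomial.X) +
      Polynomial.C (j'.base - j.base) * a = 0 := by
    rw [← h]
    simp only [tangentRuling, map_add, map_mul, map_sub, restrictZ_liftZ, algHom_C,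
      Polynomial.algebraMap_eq, ← ha, ← hb]
    simp only [restrictZ, aeval_X, Matrix.cons_val]
    ring
  have hab : a = -(b * (Polynomial.C (j.span j').coeffY +
      Polynomial.C (j.span j').coeffYZ * Polynomial.X)) := by
    refine mul_left_cancel₀ (Polynomial.C_ne_zero.2 hne) ?_
    linear_combination hzero + b * hY + b * Polynomial.X * hYZ
  have hconst : (j.span j').const = j.offset - j.base * (j.span j').coeffY := rfl
  have hcoeffZ : (j.span j').coeffZ = j.slope - j.base * (j.span j').coeffYZ := rfl
  rw [tangentRuling, ← ha, ← hb, hab, BilinearSurface.toPolynomial, hconst, hcoeffZ]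
  simp only [liftZ, map_neg, map_mul, map_add, map_sub, Polynomial.aeval_X, Polynomial.aeval_C,
    algebraMap_eq]
  ring

theorem exists_bilinearSurface_of_dvd_tangentHessian {p : ℕ} [CharP K p] (hf : Irreducible f)
    (hdeg : f.totalDegree < p) (hH : f ∣ tangentHessian f) (hbase : j.base ≠ j'.base)
    (hj : j.restrictZ f = 0) (hj' : j'.restrictZ f = 0) (hfx : j.restrictZ (pderiv 0 f) ≠ 0) :
    ∃ S : BilinearSurface K, ∀ i : CoordLine K, i.restrictY f = 0 → S.ContainsY i := by
  have hpderiv : pderiv 0 f ≠ 0 := fun h => hfx (by rw [h, map_zero])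
  have hruling := dvd_tangentRuling hj hf hfx (C_dvd_tangentFlow_self hf hdeg hpderiv hH)
  have hj'ruling : j'.restrictZ (j.tangentRuling f) = 0 := by
    obtain ⟨q, hq⟩ := hruling
    rw [hq, map_mul, hj', zero_mul]
  have hlift : ¬ f ∣ liftZ (j.restrictZ (pderiv 0 f)) := by
    rintro ⟨q, hq⟩
    apply hfx
    rw [← restrictZ_liftZ j (j.restrictZ _), hq, map_mul, hj, zero_mul]
  rw [tangentRuling_eq_mul_span hbase hj'ruling] at hruling
  obtain ⟨q, hq⟩ := (hf.prime.dvd_or_dvd hruling).resolve_left hlift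
  refine ⟨j.span j', fun i hi => BilinearSurface.containsY_of_restrictY_toPolynomial ?_⟩
  rw [hq, map_mul, hi, zero_mul]

end CoordLine

end RuledSurface

section Incidences

open MvPolynomial

namespace CoordLine

variable {K : Type*} [Field K]

open scoped Classical in
/-- The number of pairs of a `y`-line in `I` and a `z`-line in `J` that meet. -/
noncomputable def incidences (I J : Finset (CoordLine K)) : ℕ :=
  ∑ j ∈ J, #{i ∈ I | i.Meets j}

open scoped Classical in
theorem incidences_eq_sum_card_left (I J : Finset (CoordLine K)) :
    incidences I J = ∑ i ∈ I, #{j ∈ J | i.Meets j} :=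
  sum_card_bipartiteAbove_eq_sum_card_bipartiteBelow fun j i : CoordLine K => i.Meets j

theorem derivative_restrictY (i : CoordLine K) (g : MvPolynomial (Fin 3) K) :
    Polynomial.derivative (i.restrictY g) =
      Polynomial.C i.slope * i.restrictY (pderiv 0 g) + i.restrictY (pderiv 1 g) := by
  refine (derivation_algHom_apply i.restrictY (Polynomial.derivative' : Derivation K K[X] K[X])
    g).trans ?_
  rw [mul_comm]
  simp [Fin.sum_univ_three, restrictY]

theorem restrictY_tangentHessian_eq_zero {i : CoordLine K} {f : MvPolynomial (Fin 3) K}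
    (h : i.restrictY f = 0) : i.restrictY (tangentHessian f) = 0 := by
  have hfirst := derivative_restrictY i f
  rw [h, Polynomial.derivative_zero] at hfirst
  have hsecond := congrArg Polynomial.derivative hfirst
  rw [Polynomial.derivative_add, Polynomial.derivative_C_mul, derivative_restrictY,
    derivative_restrictY, Polynomial.derivative_zero, pderiv_pderiv_comm 0 1] at hsecond
  have hfy : i.restrictY (pderiv 1 f) = -(Polynomial.C i.slope * i.restrictY (pderiv 0 f)) := by
    linear_combination -hfirst
  simp only [tangentHessian, map_add, map_sub, map_mul, map_pow, map_ofNat, hfy]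
  linear_combination (-(i.restrictY (pderiv 0 f)) ^ 2) * hsecond

variable {I J : Finset (CoordLine K)} {f : MvPolynomial (Fin 3) K} {p k : ℕ}

theorem card_le_totalDegree_of_pderiv_eq_zero [CharP K p] (hf : f ≠ 0) (hdeg : f.totalDegree < p)
    (hfx : pderiv 0 f = 0) (hJ : Set.InjOn base (J : Set (CoordLine K)))
    (h : ∀ j ∈ J, j.restrictZ f = 0) : #J ≤ f.totalDegree := by
  obtain ⟨g, rfl⟩ := exists_rename_eq_of_vars_subset_range f Fin.succ (Fin.succ_injective 2)
    fun i hi => Fin.exists_succ_eq.2 (by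
      rintro rfl
      exact notMem_vars_of_pderiv_eq_zero hdeg hfx hi)
  have hleft : rename ![0, 0, 1] (rename Fin.succ g) = g := by
    rw [rename_rename, show ![0, 0, 1] ∘ Fin.succ = id by ext i; fin_cases i <;> rfl,
      rename_id_apply]
  calc #J ≤ g.totalDegree :=
        card_le_totalDegree_of_restrictZ_rename (by rintro rfl; simp at hf) hJ h
    _ = (rename ![0, 0, 1] (rename Fin.succ g)).totalDegree := congrArg _ hleft.symm
    _ ≤ (rename Fin.succ g).totalDegree := totalDegree_rename_le _ _

open scoped Classical in
theorem card_singular_le (hf : Irreducible f) (hfx : pderiv 0 f ≠ 0)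
    (hJ : Set.InjOn base (J : Set (CoordLine K))) :
    #{j ∈ J | j.restrictZ f = 0 ∧ j.restrictZ (pderiv 0 f) = 0} ≤ 2 * f.totalDegree ^ 2 := by
  refine (card_le_of_restrictZ_eq_zero hf (degreeOf_ne_zero_of_pderiv_ne_zero hfx)
    (not_dvd_pderiv hfx) (hJ.mono <| mod_cast filter_subset _ _)
    fun j hj => (mem_filter.1 hj).2).trans ?_
  rw [sq, ← mul_assoc]
  exact Nat.mul_le_mul_left _ ((totalDegree_pderiv_le 0 f).trans (Nat.sub_le _ _))

open scoped Classical in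
theorem card_le_or_forall_card_le_of_dvd_tangentHessian [CharP K p] (hf : Irreducible f)
    (hdeg : f.totalDegree < p) (hfx : pderiv 0 f ≠ 0) (hH : f ∣ tangentHessian f)
    (hJ : Set.InjOn base (J : Set (CoordLine K)))
    (hk : ∀ S : BilinearSurface K, #{i ∈ I | S.ContainsY i} ≤ k) :
    #{j ∈ J | j.restrictZ f = 0} ≤ 2 * f.totalDegree ^ 2 + 1 ∨
      #{i ∈ I | i.restrictY f = 0} ≤ k := by
  rw [← card_filter_add_card_filter_not (s := {j ∈ J | j.restrictZ f = 0})
     (fun j : CoordLine K => j.restrictZ (pderiv 0 f) = 0),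
    filter_filter, filter_filter]
  refine or_iff_not_imp_left.2 fun
    hlarge : ¬ _ + #{j ∈ J | _ ∧ j.restrictZ (pderiv 0 f) ≠ 0} ≤ _ => ?_
  have hregular : 1 < #{j ∈ J | j.restrictZ f = 0 ∧ j.restrictZ (pderiv 0 f) ≠ 0} := by
    have := card_singular_le hf hfx hJ
    omega
  obtain ⟨j, hj, j', hj', hne⟩ := one_lt_card.1 hregular
  rw [mem_filter] at hj hj'
  obtain ⟨S, hS⟩ := exists_bilinearSurface_of_dvd_tangentHessian hf hdeg hH
    (fun h => hne (hJ hj.1 hj'.1 h)) hj.2.1 hj'.2.1 hj.2.2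
  exact (card_le_card <| monotone_filter_right _ fun i _ => hS i).trans (hk S)

open scoped Classical in
theorem card_rich_le_of_not_dvd_tangentHessian (hf : Irreducible f) (hfx : pderiv 0 f ≠ 0)
    (hH : ¬ f ∣ tangentHessian f) (hI : Set.InjOn base (I : Set (CoordLine K)))
    (hJ : Set.InjOn base (J : Set (CoordLine K))) :
    #{j ∈ J | j.restrictZ f = 0 ∧
      3 * f.totalDegree < #{i ∈ I | i.restrictY f = 0 ∧ i.Meets j}} ≤ 6 * f.totalDegree ^ 2 := by
  have hdegH := totalDegree_tangentHessian_le f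
  refine (card_le_of_restrictZ_eq_zero hf (degreeOf_ne_zero_of_pderiv_ne_zero hfx) hH
    (hJ.mono <| mod_cast filter_subset _ _) fun j hj => ?_).trans
    ((Nat.mul_le_mul_left _ hdegH).trans_eq (by ring))
  obtain ⟨-, hjf, hrich⟩ := mem_filter.1 hj
  refine ⟨hjf, by_contra fun hjH => hrich.not_ge ?_⟩
  refine (card_le_of_restrictZ_ne_zero hjH (hI.mono <| mod_cast filter_subset _ _)
    fun i hi => ?_).trans hdegH
  obtain ⟨-, hif, hmeets⟩ := mem_filter.1 hi
  exact ⟨hmeets, restrictY_tangentHessian_eq_zero hif⟩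

open scoped Classical in
theorem card_rich_le [CharP K p] (hf : Irreducible f) (hdeg : f.totalDegree < p)
    (hI : Set.InjOn base (I : Set (CoordLine K))) (hJ : Set.InjOn base (J : Set (CoordLine K)))
    (hk : ∀ S : BilinearSurface K, #{i ∈ I | S.ContainsY i} ≤ k) :
    #{j ∈ J | j.restrictZ f = 0 ∧
      3 * f.totalDegree + k < #{i ∈ I | i.restrictY f = 0 ∧ i.Meets j}} ≤
        9 * f.totalDegree ^ 2 := by
  have hpos : 0 < f.totalDegree ^ 2 := by
    have := totalDegree_pos_of_irreducible hf
    positivity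
  have hcontained : #{j ∈ J | j.restrictZ f = 0 ∧
      3 * f.totalDegree + k < #{i ∈ I | i.restrictY f = 0 ∧ i.Meets j}} ≤
        #{j ∈ J | j.restrictZ f = 0} :=
    card_le_card <| monotone_filter_right J fun j _ hj => hj.1
  by_cases hfx : pderiv 0 f = 0
  · have := card_le_totalDegree_of_pderiv_eq_zero hf.ne_zero hdeg hfx
      (J := {j ∈ J | j.restrictZ f = 0}) (hJ.mono <| coe_subset.2 <| filter_subset _ _)
      fun j hj => (mem_filter.1 hj).2
    nlinarith
  by_cases hH : f ∣ tangentHessian f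
  · rcases card_le_or_forall_card_le_of_dvd_tangentHessian hf hdeg hfx hH hJ hk with hJf | hIf
    · omega
    · rw [filter_eq_empty_iff.2 fun j _ hj => ?_, card_empty]
      · exact Nat.zero_le _
      · have : #{i ∈ I | i.restrictY f = 0 ∧ i.Meets j} ≤ #{i ∈ I | i.restrictY f = 0} :=
          card_le_card <| monotone_filter_right _ fun i _ hi => hi.1
        omega
  · refine (card_le_card <| monotone_filter_right _ fun j _ hj => ⟨hj.1, ?_⟩).trans
      ((card_rich_le_of_not_dvd_tangentHessian hf hfx hH hI hJ).trans (by omega))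
    omega

open scoped Classical in
theorem exists_exceptional_of_irreducible [CharP K p] (hf : Irreducible f) {D : ℕ}
    (hfD : f.totalDegree ≤ D) (hD : D < p) (hI : Set.InjOn base (I : Set (CoordLine K)))
    (hJ : Set.InjOn base (J : Set (CoordLine K)))
    (hk : ∀ S : BilinearSurface K, #{i ∈ I | S.ContainsY i} ≤ k) :
    ∃ B ⊆ J, #B ≤ 9 * f.totalDegree ^ 2 ∧
      ∑ j ∈ J \ B with j.restrictZ f = 0, (#{i ∈ I | i.Meets j} - (3 * D + k)) ≤
        f.totalDegree * #I := by
  obtain ⟨B, hB⟩ : ∃ B, B = {j ∈ J | j.restrictZ f = 0 ∧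
    3 * f.totalDegree + k < #{i ∈ I | i.restrictY f = 0 ∧ i.Meets j}} := ⟨_, rfl⟩
  refine ⟨B, hB ▸ filter_subset _ _, hB ▸ card_rich_le hf (hfD.trans_lt hD) hI hJ hk, ?_⟩
  calc ∑ j ∈ J \ B with j.restrictZ f = 0, (#{i ∈ I | i.Meets j} - (3 * D + k))
      ≤ ∑ j ∈ J \ B with j.restrictZ f = 0, #{i ∈ {i ∈ I | i.restrictY f ≠ 0} | i.Meets j} := by
        refine sum_le_sum fun j hj => ?_
        simp only [hB, mem_filter, mem_sdiff, not_and, not_lt] at hj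
        have hpoor := hj.1.2 hj.1.1 hj.2
        have hsplit := card_filter_add_card_filter_not (s := {i ∈ I | i.Meets j})
          (fun i => i.restrictY f = 0)
        simp only [filter_filter, ne_eq, and_comm (a := Meets _ j)] at hsplit ⊢
        omega
    _ = ∑ i ∈ I with i.restrictY f ≠ 0, #{j ∈ {j ∈ J \ B | j.restrictZ f = 0} | i.Meets j} :=
        incidences_eq_sum_card_left {i ∈ I | i.restrictY f ≠ 0} {j ∈ J \ B | j.restrictZ f = 0}
    _ ≤ ∑ i ∈ I with i.restrictY f ≠ 0, f.totalDegree := by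
        refine sum_le_sum fun i hi => card_le_of_restrictY_ne_zero (mem_filter.1 hi).2
          (hJ.mono fun j hj => ?_) fun j hj => ?_
        all_goals simp only [coe_filter, mem_filter, mem_sdiff, Set.mem_ofPred_eq] at hj
        · exact hj.1.1.1
        · exact ⟨hj.2, hj.1.2⟩
    _ ≤ f.totalDegree * #I := by
        rw [sum_const, smul_eq_mul, mul_comm]
        exact Nat.mul_le_mul_left _ (card_filter_le _ _)

open scoped Classical in
theorem exists_exceptional [CharP K p] (hf : f ≠ 0) {D : ℕ}
    (hfD : f.totalDegree ≤ D) (hD : D < p) (hI : Set.InjOn base (I : Set (CoordLine K)))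
    (hJ : Set.InjOn base (J : Set (CoordLine K)))
    (hk : ∀ S : BilinearSurface K, #{i ∈ I | S.ContainsY i} ≤ k) :
    ∃ B ⊆ J, #B ≤ 9 * f.totalDegree ^ 2 ∧
      ∑ j ∈ J \ B with j.restrictZ f = 0, (#{i ∈ I | i.Meets j} - (3 * D + k)) ≤
        f.totalDegree * #I := by
  induction f using WfDvdMonoid.induction_on_irreducible with
  | zero => exact absurd rfl hf
  | unit u hu =>
    refine ⟨∅, empty_subset _, by simp, ?_⟩
    rw [filter_eq_empty_iff.2 fun j _ => (hu.map j.restrictZ).ne_zero, sum_empty]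
    exact Nat.zero_le _
  | mul g q hg hq ih =>
    have hmul := totalDegree_mul_of_isDomain hq.ne_zero hg
    obtain ⟨B, hB, hBcard, hBsum⟩ := ih hg (by omega)
    obtain ⟨B', hB', hB'card, hB'sum⟩ := exists_exceptional_of_irreducible hq
      (show q.totalDegree ≤ D by omega) hD hI hJ hk
    refine ⟨B' ∪ B, union_subset hB' hB, ?_, ?_⟩
    · have := card_union_le B' B
      rw [hmul]
      nlinarith [Nat.zero_le (q.totalDegree * g.totalDegree)]
    · have hsub : {j ∈ J \ (B' ∪ B) | j.restrictZ (q * g) = 0} ⊆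
          {j ∈ J \ B' | j.restrictZ q = 0} ∪ {j ∈ J \ B | j.restrictZ g = 0} := fun j => by
        simp only [mem_filter, mem_sdiff, mem_union, map_mul, mul_eq_zero]
        tauto
      rw [hmul, add_mul]
      exact (sum_le_sum_of_subset hsub).trans <|
        (Nat.le_of_add_right_le (sum_union_inter ..).le).trans (add_le_add hB'sum hBsum)

theorem finrank_restrictDegree_fin (n d : ℕ) :
    Module.finrank K (restrictDegree (Fin n) K d) = (d + 1) ^ n := by
  have e : {m : Fin n →₀ ℕ | ∀ i, m i ≤ d} ≃ (Fin n → Fin (d + 1)) :=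
    { toFun m i := ⟨m.1 i, Nat.lt_succ_of_le (m.2 i)⟩
      invFun v := ⟨Finsupp.equivFunOnFinite.symm fun i => v i, fun i => Nat.le_of_lt_succ (v i).2⟩
      left_inv m := by ext; rfl
      right_inv v := rfl }
  rw [restrictDegree, Module.finrank_eq_nat_card_basis (basisRestrictSupport K _), Nat.card_congr e]
  simp

theorem totalDegree_le_of_mem_restrictDegree {n d : ℕ} {f : MvPolynomial (Fin n) K}
    (hf : f ∈ restrictDegree (Fin n) K d) : f.totalDegree ≤ n * d := by
  refine Finset.sup_le fun m hm => ?_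
  rw [Finsupp.sum_fintype _ _ fun _ => rfl]
  simpa using sum_le_card_nsmul univ m d fun i _ => (mem_restrictDegree (Fin n) f d).1 hf m hm i

theorem exists_ne_zero_restrictY_eq_zero (I : Finset (CoordLine K)) :
    ∃ f : MvPolynomial (Fin 3) K, f ≠ 0 ∧ f.totalDegree ≤ 3 * Nat.sqrt (3 * #I) ∧
      ∀ i ∈ I, i.restrictY f = 0 := by
  set s := Nat.sqrt (3 * #I)
  let coeffs : restrictDegree (Fin 3) K s →ₗ[K] (I × Fin (3 * s + 1) → K) :=
    LinearMap.pi fun q =>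
      Polynomial.lcoeff K q.2 ∘ₗ q.1.1.restrictY.toLinearMap ∘ₗ Submodule.subtype _
  have hker : LinearMap.ker coeffs ≠ ⊥ := by
    refine LinearMap.ker_ne_bot_of_finrank_lt ?_
    rw [finrank_restrictDegree_fin, Module.finrank_fintype_fun_eq_card, Fintype.card_prod,
      Fintype.card_coe, Fintype.card_fin]
    have : 3 * #I < (s + 1) * (s + 1) := Nat.lt_succ_sqrt _
    nlinarith
  obtain ⟨f, hf, hf0⟩ := (Submodule.ne_bot_iff _).1 hker
  have hdeg := totalDegree_le_of_mem_restrictDegree f.2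
  refine ⟨f, by simpa using hf0, hdeg, fun i hi => Polynomial.ext fun n => ?_⟩
  rcases le_or_gt n (3 * s) with hn | hn
  · exact congrFun (LinearMap.mem_ker.1 hf) (⟨i, hi⟩, ⟨n, Nat.lt_succ_of_le hn⟩)
  · exact Polynomial.coeff_eq_zero_of_natDegree_lt
      (((i.natDegree_restrictY_le _).trans hdeg).trans_lt hn)

open scoped Classical in
theorem exists_incidences_sdiff_le [CharP K p] (hI : Set.InjOn base (I : Set (CoordLine K)))
    (hJ : Set.InjOn base (J : Set (CoordLine K)))
    (hk : ∀ S : BilinearSurface K, #{i ∈ I | S.ContainsY i} ≤ k) (hp : 27 * #I < p ^ 2) :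
    ∃ B ⊆ J, #B ≤ 243 * #I ∧ incidences I (J \ B) ≤
      (9 * Nat.sqrt (3 * #I) + k) * #J + 3 * Nat.sqrt (3 * #I) * #I := by
  obtain ⟨f, hf, hdeg, hfI⟩ := exists_ne_zero_restrictY_eq_zero I
  set D := 3 * Nat.sqrt (3 * #I) with hD
  have hD2 : D ^ 2 ≤ 27 * #I := by
    have := Nat.sqrt_le (3 * #I)
    rw [hD]
    nlinarith
  obtain ⟨B, hB, hBcard, hBsum⟩ := exists_exceptional hf hdeg
    (lt_of_pow_lt_pow_left₀ 2 (Nat.zero_le _) (hD2.trans_lt hp)) hI hJ hk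
  have hoff : ∀ j, j.restrictZ f ≠ 0 → #{i ∈ I | i.Meets j} - (3 * D + k) = 0 := fun j hj => by
    have := card_le_of_restrictZ_ne_zero hj (hI.mono <| mod_cast filter_subset (Meets · j) I)
      fun i hi => ⟨(mem_filter.1 hi).2, hfI i (mem_filter.1 hi).1⟩
    omega
  refine ⟨B, hB, ?_, ?_⟩
  · have := Nat.pow_le_pow_left hdeg 2
    omega
  · rw [sum_filter_of_ne fun j _ hj => by_contra fun h => hj (hoff j h)] at hBsum
    calc incidences I (J \ B)
        ≤ ∑ j ∈ J \ B, ((3 * D + k) + (#{i ∈ I | i.Meets j} - (3 * D + k))) :=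
          sum_le_sum fun j _ => le_add_tsub
      _ ≤ (3 * D + k) * #(J \ B) + f.totalDegree * #I := by
          rw [sum_add_distrib, sum_const, smul_eq_mul, mul_comm (#_)]
          exact Nat.add_le_add_left hBsum _
      _ ≤ (9 * Nat.sqrt (3 * #I) + k) * #J + D * #I := by
          rw [show 3 * D = 9 * Nat.sqrt (3 * #I) by omega]
          gcongr
          exact sdiff_subset

end CoordLine

namespace CoordLine

variable {K : Type*} [Field K] {I J : Finset (CoordLine K)}

open scoped Classical in
theorem incidences_mono_left {I' : Finset (CoordLine K)} (h : I ⊆ I') :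
    incidences I J ≤ incidences I' J :=
  sum_le_sum fun _ _ => card_le_card <| filter_subset_filter _ h

open scoped Classical in
theorem incidences_union_left_le (I I' J : Finset (CoordLine K)) :
    incidences (I ∪ I') J ≤ incidences I J + incidences I' J := by
  rw [incidences, incidences, incidences, ← sum_add_distrib]
  refine sum_le_sum fun j _ => ?_
  rw [filter_union]
  exact card_union_le _ _

open scoped Classical in
theorem incidences_biUnion_left_le {ι : Type*} (s : Finset ι) (I : ι → Finset (CoordLine K))
    (J : Finset (CoordLine K)) : incidences (s.biUnion I) J ≤ ∑ a ∈ s, incidences (I a) J := by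
  simp only [incidences]
  rw [sum_comm]
  refine sum_le_sum fun j _ => ?_
  rw [filter_biUnion]
  exact card_biUnion_le

open scoped Classical in
theorem incidences_le_mul_of_forall_subset {a b m : ℕ} (hI : #I ≤ m * a)
    (h : ∀ I' ⊆ I, #I' ≤ a → incidences I' J ≤ b) : incidences I J ≤ m * b := by
  induction m generalizing I with
  | zero => simp [incidences, card_eq_zero.1 (show #I = 0 by omega)]
  | succ m ih =>
    rcases le_or_gt #I a with ha | ha
    · exact (h I subset_rfl ha).trans (Nat.le_mul_of_pos_left _ m.succ_pos)
    obtain ⟨I', hI', hcard⟩ := exists_subset_card_eq ha.le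
    have hrest := ih (I := I \ I') (by rw [card_sdiff_of_subset hI', hcard, add_mul] at *; omega)
      fun I'' hI'' => h I'' (hI''.trans sdiff_subset)
    rw [← union_sdiff_of_subset hI', add_mul, one_mul, add_comm]
    exact (incidences_union_left_le ..).trans (add_le_add (h I' hI' hcard.le) hrest)

open scoped Classical in
theorem exists_subset_forall_card_containsY_le (M : ℕ) (I : Finset (CoordLine K)) :
    ∃ I₀ ⊆ I, ∃ 𝓢 : Finset (BilinearSurface K), #𝓢 * M ≤ #I ∧
      (∀ S : BilinearSurface K, #{i ∈ I₀ | S.ContainsY i} ≤ M) ∧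
      I ⊆ I₀ ∪ 𝓢.biUnion fun S => {i ∈ I | S.ContainsY i} := by
  induction I using Finset.strongInduction with
  | H I ih =>
    by_cases hI : ∀ S : BilinearSurface K, #{i ∈ I | S.ContainsY i} ≤ M
    · exact ⟨I, subset_rfl, ∅, by simp, hI, by simp⟩
    push Not at hI
    obtain ⟨S, hS⟩ := hI
    have hsplit : #{i ∈ I | S.ContainsY i} + #{i ∈ I | ¬S.ContainsY i} = #I :=
      card_filter_add_card_filter_not _
    obtain ⟨I₀, hI₀, 𝓢, hcard, hpoor, hcover⟩ := ih {i ∈ I | ¬S.ContainsY i} <|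
      (filter_subset _ _).ssubset_of_ne fun h => by rw [h] at hsplit; omega
    refine ⟨I₀, hI₀.trans (filter_subset _ _), insert S 𝓢, ?_, hpoor, fun i hi => ?_⟩
    · have := Nat.mul_le_mul_right M (card_insert_le S 𝓢)
      rw [add_mul] at this
      omega
    · by_cases hiS : S.ContainsY i
      · simp [hi, hiS]
      · have hmem := hcover (mem_filter.2 ⟨hi, hiS⟩)
        simp only [mem_union, mem_biUnion, mem_filter, mem_insert] at hmem ⊢
        exact hmem.imp_right fun ⟨S', hS', h⟩ => ⟨S', Or.inr hS', h.1.1, h.2⟩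

open scoped Classical in
theorem card_containsY_meets_le_one {S : BilinearSurface K} {j : CoordLine K}
    (hI : Set.InjOn base (I : Set (CoordLine K))) (hj : ¬S.ContainsZ j) :
    #{i ∈ {i ∈ I | S.ContainsY i} | i.Meets j} ≤ 1 := by
  simp only [card_le_one, mem_filter, and_imp]
  rintro i hi ⟨hoff, hslope⟩ hmeet i' hi' ⟨hoff', hslope'⟩ hmeet'
  refine hI hi hi' <| by_contra fun hne => hj ?_
  rw [Meets, hoff, hslope] at hmeet
  rw [Meets, hoff', hslope'] at hmeet'
  have hjslope : j.slope = S.coeffZ + S.coeffYZ * j.base :=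
    mul_right_cancel₀ (sub_ne_zero.2 hne) (by linear_combination hmeet' - hmeet)
  exact ⟨by linear_combination -hmeet - i.base * hjslope, hjslope⟩

open scoped Classical in
theorem card_containsZ_and_containsZ_le_one {S S' : BilinearSurface K}
    (hJ : Set.InjOn base (J : Set (CoordLine K))) (hS : S ≠ S') :
    #{j ∈ J | S.ContainsZ j ∧ S'.ContainsZ j} ≤ 1 := by
  simp only [card_le_one, mem_filter, and_imp]
  rintro j hj ⟨hoff₁, hslope₁⟩ ⟨hoff₁', hslope₁'⟩ j' hj' ⟨hoff₂, hslope₂⟩ ⟨hoff₂', hslope₂'⟩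
  refine hJ hj hj' <| by_contra fun hne => hS ?_
  have hY : S.coeffY = S'.coeffY := mul_right_cancel₀ (sub_ne_zero.2 hne)
    (by linear_combination hoff₁' - hoff₂' - hoff₁ + hoff₂)
  have hYZ : S.coeffYZ = S'.coeffYZ := mul_right_cancel₀ (sub_ne_zero.2 hne)
    (by linear_combination hslope₁' - hslope₂' - hslope₁ + hslope₂)
  have hconst : S.const = S'.const := by linear_combination hoff₁' - hoff₁ - j.base * hY
  have hZ : S.coeffZ = S'.coeffZ := by linear_combination hslope₁' - hslope₁ - j.base * hYZ
  exact BilinearSurface.ext hconst hY hZ hYZ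

end CoordLine

open scoped Classical in
theorem sum_card_le_card_add_sq_of_card_inter_le_one {α β : Type*} (r : α → β → Prop)
    (s : Finset α) (t : Finset β)
    (h : ∀ a ∈ s, ∀ a' ∈ s, a ≠ a' → #{b ∈ t | r a b ∧ r a' b} ≤ 1) :
    ∑ a ∈ s, #{b ∈ t | r a b} ≤ #t + #s ^ 2 := by
  have hpairs : ∑ b ∈ t, #{a ∈ s | r a b}.offDiag ≤ #s ^ 2 := calc
    _ = ∑ b ∈ t, #{q ∈ s.offDiag | r q.1 b ∧ r q.2 b} := by
      refine sum_congr rfl fun b _ => congrArg card ?_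
      ext q
      simp only [mem_offDiag, mem_filter]
      tauto
    _ = ∑ q ∈ s.offDiag, #{b ∈ t | r q.1 b ∧ r q.2 b} :=
      sum_card_bipartiteAbove_eq_sum_card_bipartiteBelow fun b (q : α × α) => r q.1 b ∧ r q.2 b
    _ ≤ ∑ _q ∈ s.offDiag, 1 := sum_le_sum fun q hq => by
      obtain ⟨h₁, h₂, hne⟩ := mem_offDiag.1 hq
      exact h q.1 h₁ q.2 h₂ hne
    _ ≤ #s ^ 2 := by
      rw [sum_const, smul_eq_mul, mul_one, offDiag_card, sq]
      exact Nat.sub_le _ _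
  calc ∑ a ∈ s, #{b ∈ t | r a b}
      = ∑ b ∈ t, #{a ∈ s | r a b} := sum_card_bipartiteAbove_eq_sum_card_bipartiteBelow r
    _ ≤ ∑ b ∈ t, (1 + #{a ∈ s | r a b}.offDiag) := sum_le_sum fun b _ => by
        rw [offDiag_card, ← Nat.mul_sub_one]
        rcases Nat.lt_or_ge #{a ∈ s | r a b} 2 with hc | hc
        · omega
        · exact Nat.le_add_left_of_le <| Nat.le_mul_of_pos_right _ (by omega)
    _ ≤ #t + #s ^ 2 := by
        rw [sum_add_distrib, sum_const, smul_eq_mul, mul_one]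
        exact Nat.add_le_add_left hpairs _

namespace CoordLine

variable {K : Type*} [Field K] {I J : Finset (CoordLine K)} {p k : ℕ}

open scoped Classical in
theorem incidences_containsY_le (S : BilinearSurface K)
    (hI : Set.InjOn base (I : Set (CoordLine K))) (hk : #{i ∈ I | S.ContainsY i} ≤ k) :
    incidences {i ∈ I | S.ContainsY i} J ≤ #J + k * #{j ∈ J | S.ContainsZ j} := by
  rw [incidences, ← sum_filter_add_sum_filter_not J S.ContainsZ, add_comm]
  refine add_le_add ?_ ?_
  · exact (sum_le_card_nsmul _ _ 1 fun j hj =>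
      card_containsY_meets_le_one hI (mem_filter.1 hj).2).trans (by simp [card_filter_le])
  · refine (sum_le_card_nsmul _ _ k fun j _ => (card_filter_le _ _).trans hk).trans ?_
    rw [smul_eq_mul, mul_comm]

open scoped Classical in
theorem incidences_le_of_subset_union_biUnion {I₀ : Finset (CoordLine K)}
    {𝓢 : Finset (BilinearSurface K)} (hI : Set.InjOn base (I : Set (CoordLine K)))
    (hJ : Set.InjOn base (J : Set (CoordLine K)))
    (hk : ∀ S : BilinearSurface K, #{i ∈ I | S.ContainsY i} ≤ k)
    (h : I ⊆ I₀ ∪ 𝓢.biUnion fun S => {i ∈ I | S.ContainsY i}) :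
    incidences I J ≤ incidences I₀ J + (#𝓢 * #J + k * (#J + #𝓢 ^ 2)) := by
  refine (incidences_mono_left h).trans <| (incidences_union_left_le ..).trans <|
    Nat.add_le_add_left ?_ _
  calc incidences (𝓢.biUnion fun S => {i ∈ I | S.ContainsY i}) J
      ≤ ∑ S ∈ 𝓢, incidences {i ∈ I | S.ContainsY i} J := incidences_biUnion_left_le ..
    _ ≤ ∑ S ∈ 𝓢, (#J + k * #{j ∈ J | S.ContainsZ j}) :=
        sum_le_sum fun S _ => incidences_containsY_le S hI (hk S)
    _ = #𝓢 * #J + k * ∑ S ∈ 𝓢, #{j ∈ J | S.ContainsZ j} := by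
        rw [sum_add_distrib, sum_const, smul_eq_mul, mul_sum]
    _ ≤ #𝓢 * #J + k * (#J + #𝓢 ^ 2) := by
        gcongr
        exact sum_card_le_card_add_sq_of_card_inter_le_one _ _ _ fun S _ S' _ hne =>
          card_containsZ_and_containsZ_le_one hJ hne

open scoped Classical in
theorem exists_incidences_le_incidences_add [CharP K p] {l : ℕ}
    (hI : Set.InjOn base (I : Set (CoordLine K))) (hJ : Set.InjOn base (J : Set (CoordLine K)))
    (hk : ∀ S : BilinearSurface K, #{i ∈ I | S.ContainsY i} ≤ k) (hp : 27 * #I < p ^ 2)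
    (hl : #I ≤ 4 ^ l) :
    ∃ I₀ ⊆ I, ∃ B ⊆ J, #B ≤ 243 * 4 ^ l ∧
      (∀ S : BilinearSurface K, #{i ∈ I₀ | S.ContainsY i} ≤ 2 ^ l) ∧
      incidences I J ≤
        incidences I₀ B + (20 * 2 ^ l * #J + k * (#J + 4 ^ l) + 6 * 8 ^ l) := by
  obtain ⟨I₀, hI₀, 𝓢, h𝓢, hpoor, hcover⟩ := exists_subset_forall_card_containsY_le (2 ^ l) I
  have hcard := card_le_card hI₀
  obtain ⟨B, hB, hBcard, hBsum⟩ := exists_incidences_sdiff_le (hI.mono <| coe_subset.2 hI₀) hJ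
    hpoor (by omega)
  refine ⟨I₀, hI₀, B, hB, by omega, hpoor, ?_⟩
  have h4 : 4 ^ l = 2 ^ l * 2 ^ l := by simp [← mul_pow]
  have h8 : 8 ^ l = 2 ^ l * 4 ^ l := by simp [← mul_pow]
  have h𝓢' : #𝓢 ≤ 2 ^ l := Nat.le_of_mul_le_mul_right (by omega) (Nat.two_pow_pos l)
  have hsqrt : Nat.sqrt (3 * #I₀) ≤ 2 * 2 ^ l := by
    rw [← Nat.lt_succ_iff, Nat.sqrt_lt]
    nlinarith
  calc incidences I J
      ≤ incidences I₀ J + (#𝓢 * #J + k * (#J + #𝓢 ^ 2)) :=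
        incidences_le_of_subset_union_biUnion hI hJ hk hcover
    _ = incidences I₀ B + incidences I₀ (J \ B) + (#𝓢 * #J + k * (#J + #𝓢 ^ 2)) := by
        rw [add_comm (incidences I₀ B), incidences, incidences, incidences, sum_sdiff hB]
    _ ≤ incidences I₀ B + ((9 * (2 * 2 ^ l) + 2 ^ l) * #J + 3 * (2 * 2 ^ l) * 4 ^ l) +
          (2 ^ l * #J + k * (#J + (2 ^ l) ^ 2)) := by
        gcongr
        refine hBsum.trans ?_
        gcongr
        exact hcard.trans hl
    _ = _ := by
        rw [h8, h4]
        ring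

open scoped Classical in
theorem incidences_le_mul_eight_pow [CharP K p] {l : ℕ}
    (hI : Set.InjOn base (I : Set (CoordLine K))) (hJ : Set.InjOn base (J : Set (CoordLine K)))
    (hk : ∀ S : BilinearSurface K, #{i ∈ I | S.ContainsY i} ≤ 2 * 2 ^ l)
    (hp : 27 * #I < p ^ 2) (hIl : #I ≤ 4 ^ l) (hJl : #J ≤ 972 * 4 ^ l) :
    incidences I J ≤ 50000 * 8 ^ l := by
  induction l generalizing I J with
  | zero =>
    have hone : incidences I J ≤ #J • 1 :=
      sum_le_card_nsmul _ _ 1 fun j _ => (card_filter_le _ _).trans hIl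
    rw [smul_eq_mul] at hone
    omega
  | succ l ih =>
    obtain ⟨I₀, hI₀, B, hB, hBcard, hpoor, hstep⟩ :=
      exists_incidences_le_incidences_add hI hJ hk hp hIl
    have hquarters : incidences I₀ B ≤ 4 * (50000 * 8 ^ l) := by
      refine incidences_le_mul_of_forall_subset (a := 4 ^ l) ?_ fun I' hI' hcard => ?_
      · rw [← pow_succ']
        exact (card_le_card hI₀).trans hIl
      · have hI'card := card_le_card (hI'.trans hI₀)
        refine ih (hI.mono <| coe_subset.2 <| hI'.trans hI₀) (hJ.mono <| coe_subset.2 hB)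
          (fun S => ?_) (by omega) hcard (by omega)
        rw [← pow_succ']
        exact (card_le_card <| filter_subset_filter _ hI').trans (hpoor S)
    have h8 : 8 ^ (l + 1) = 2 ^ (l + 1) * 4 ^ (l + 1) := by simp [← mul_pow]
    nlinarith [Nat.mul_le_mul_left (2 ^ (l + 1)) hJl, pow_succ 8 l]

open scoped Classical in
theorem incidences_le [CharP K p] {l : ℕ}
    (hI : Set.InjOn base (I : Set (CoordLine K))) (hJ : Set.InjOn base (J : Set (CoordLine K)))
    (hk : ∀ S : BilinearSurface K, #{i ∈ I | S.ContainsY i} ≤ k) (hp : 27 * #I < p ^ 2)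
    (hl : #I ≤ 4 ^ l) :
    incidences I J ≤ 20 * 2 ^ l * #J + k * (#J + 4 ^ l) + 50006 * 8 ^ l := by
  obtain ⟨I₀, hI₀, B, hB, hBcard, hpoor, hstep⟩ :=
    exists_incidences_le_incidences_add hI hJ hk hp hl
  have hcard := card_le_card hI₀
  have hrest := incidences_le_mul_eight_pow (hI.mono <| coe_subset.2 hI₀)
    (hJ.mono <| coe_subset.2 hB) (fun S => (hpoor S).trans (by omega)) (by omega) (by omega)
    (by omega : #B ≤ 972 * 4 ^ l)
  omega

end CoordLine

end Incidences

section PointPlane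

universe u v in
theorem collinear_of_linearMap_eq {F : Type u} {V : Type v} {W : Type*} [Field F]
    [AddCommGroup V] [Module F V] [AddCommGroup W] [Module F W] {s : Set V} (L : V →ₗ[F] W)
    (f : V →ₗ[F] F)
    (hL : ∀ v ∈ s, ∀ w ∈ s, L v = L w) (hf : ∀ d, L d = 0 → f d = 0 → d = 0) :
    Collinear F s := by
  have hspan : vectorSpan F s ≤ LinearMap.ker L := by
    refine Submodule.span_le.2 ?_
    rintro _ ⟨v, hv, w, hw, rfl⟩
    simp [hL v hv w hw]
  have hinj : Function.Injective (f ∘ₗ (vectorSpan F s).subtype) :=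
    (injective_iff_map_eq_zero _).2 fun d hd => Subtype.ext (hf d (hspan d.2) hd)
  rw [collinear_iff_rank_le_one, ← Cardinal.lift_le.{u, v}]
  simpa using LinearMap.lift_rank_le_of_injective _ hinj

theorem eq_zero_of_sum_algebraMap_mul_pow_eq_zero {F K : Type*} [CommRing F]
    [CommRing K] [Algebra F K] {T : K} (hT : Transcendental F T) {n : ℕ} (c : Fin n → F)
    (h : ∑ i, algebraMap F K (c i) * T ^ (i : ℕ) = 0) (i : Fin n) : c i = 0 := by
  have hpoly : ∑ i : Fin n, Polynomial.monomial i (c i) = 0 :=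
    transcendental_iff.1 hT _ (by simpa [Polynomial.aeval_monomial] using h)
  simpa [Polynomial.finsetSum_coeff, Polynomial.coeff_monomial, Fin.val_inj] using
    congrArg (Polynomial.coeff · i) hpoly

/-- The point `v = ((m, c), a)` lies on the plane with dual coordinates `w = ((m', c'), a')`, that
is, `m a' + c = m' a + c'`. -/
def OnPlane {F : Type*} [Add F] [Mul F] (v w : (F × F) × F) : Prop :=
  v.1.1 * w.2 + v.1.2 = w.1.1 * v.2 + w.1.2

variable {F K : Type*} [Field F] [Field K] [Algebra F K]

/-- The `y`-line over `K` that encodes a point of `F³`, for a parameter `T : K` transcendental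
over `F`. -/
noncomputable def pointLine (T : K) (v : (F × F) × F) : CoordLine K where
  base := (algebraMap F K v.2 - T ^ 4 * algebraMap F K v.1.1 - T * algebraMap F K v.1.2) /
    (1 - T ^ 2 * algebraMap F K v.1.1)
  offset := algebraMap F K v.1.2 / (1 - T ^ 2 * algebraMap F K v.1.1)
  slope := algebraMap F K v.1.1 / (1 - T ^ 2 * algebraMap F K v.1.1)

/-- The `z`-line over `K` that encodes a plane of `F³`, so that incidence of points and planes
becomes incidence of lines. -/
noncomputable def planeLine (T : K) (w : (F × F) × F) : CoordLine K where
  base := (algebraMap F K w.2 - T ^ 2 * algebraMap F K w.1.2 - T ^ 4 * algebraMap F K w.1.1) /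
    (1 - T * algebraMap F K w.1.1)
  offset := algebraMap F K w.1.2 / (1 - T * algebraMap F K w.1.1)
  slope := algebraMap F K w.1.1 / (1 - T * algebraMap F K w.1.1)

variable {T : K}

theorem one_sub_pow_mul_algebraMap_ne_zero (hT : Transcendental F T) {n : ℕ} (hn : n ≠ 0) (m : F) :
    1 - T ^ n * algebraMap F K m ≠ 0 := fun h => by
  have hpoly : (1 - Polynomial.X ^ n * Polynomial.C m : F[X]) = 0 :=
    transcendental_iff.1 hT _ <| by
      rwa [map_sub, map_one, map_mul, map_pow, Polynomial.aeval_X, Polynomial.aeval_C]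
  simpa [hn] using congrArg (Polynomial.eval 0) hpoly

theorem base_pointLine_injective (hT : Transcendental F T) :
    Function.Injective fun v : (F × F) × F => (pointLine T v).base := by
  rintro ⟨⟨m, c⟩, a⟩ ⟨⟨m', c'⟩, a'⟩ h
  simp only [pointLine] at h
  rw [div_eq_div_iff (one_sub_pow_mul_algebraMap_ne_zero hT two_ne_zero _)
      (one_sub_pow_mul_algebraMap_ne_zero hT two_ne_zero _)] at h
  have hcoeff := eq_zero_of_sum_algebraMap_mul_pow_eq_zero hT
    ![a - a', c' - c, a' * m - a * m', c * m' - c' * m, m' - m] (by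
      simp only [Fin.sum_univ_five, Matrix.cons_val, Fin.isValue, map_sub, map_mul,
        Fin.coe_ofNat_eq_mod]
      linear_combination h)
  have h0 := hcoeff 0
  have h1 := hcoeff 1
  have h4 := hcoeff 4
  simp only [Matrix.cons_val, Fin.isValue, sub_eq_zero] at h0 h1 h4
  rw [h0, h1, h4]

theorem base_planeLine_injective (hT : Transcendental F T) :
    Function.Injective fun w : (F × F) × F => (planeLine T w).base := by
  rintro ⟨⟨m, c⟩, a⟩ ⟨⟨m', c'⟩, a'⟩ h
  simp only [planeLine] at h
  rw [← pow_one T, div_eq_div_iff (one_sub_pow_mul_algebraMap_ne_zero hT one_ne_zero _)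
      (one_sub_pow_mul_algebraMap_ne_zero hT one_ne_zero _)] at h
  have hcoeff := eq_zero_of_sum_algebraMap_mul_pow_eq_zero hT
    ![a - a', a' * m - a * m', c' - c, c * m' - c' * m, m' - m] (by
      simp only [Fin.sum_univ_five, Matrix.cons_val, Fin.isValue, map_sub, map_mul,
        Fin.coe_ofNat_eq_mod]
      linear_combination h)
  have h0 := hcoeff 0
  have h2 := hcoeff 2
  have h4 := hcoeff 4
  simp only [Matrix.cons_val, Fin.isValue, sub_eq_zero] at h0 h2 h4
  rw [h0, h2, h4]

theorem meets_pointLine_planeLine (hT : Transcendental F T) {v w : (F × F) × F} :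
    (pointLine T v).Meets (planeLine T w) ↔ OnPlane v w := by
  have hv := one_sub_pow_mul_algebraMap_ne_zero hT two_ne_zero v.1.1
  have hw := one_sub_pow_mul_algebraMap_ne_zero hT one_ne_zero w.1.1
  rw [pow_one] at hw
  rw [CoordLine.Meets, OnPlane, ← (algebraMap F K).injective.eq_iff, pointLine, planeLine]
  field_simp
  simp only [map_add, map_mul]
  constructor <;> intro h <;> linear_combination h

theorem BilinearSurface.ContainsY.equations_pointLine (hT : Transcendental F T)
    {S : BilinearSurface K} {v : (F × F) × F} (h : S.ContainsY (pointLine T v)) :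
    (1 + S.coeffZ * T) * algebraMap F K v.1.2 +
        (S.const * T ^ 2 + S.coeffZ * T ^ 4) * algebraMap F K v.1.1 -
        S.coeffZ * algebraMap F K v.2 = S.const ∧
      S.coeffYZ * T * algebraMap F K v.1.2 +
        (1 + S.coeffY * T ^ 2 + S.coeffYZ * T ^ 4) * algebraMap F K v.1.1 -
        S.coeffYZ * algebraMap F K v.2 = S.coeffY := by
  have hv := one_sub_pow_mul_algebraMap_ne_zero hT two_ne_zero v.1.1
  obtain ⟨hoffset, hslope⟩ := h
  simp only [pointLine] at hoffset hslope
  field_simp at hoffset hslope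
  exact ⟨by linear_combination hoffset, by linear_combination hslope⟩

theorem exists_forall_eq_zero_of_equations {T s y z w : K} (h : w ≠ 0 ∨ 1 + y * T ^ 2 ≠ 0) :
    ∃ i : Fin 3, ∀ x : Fin 3 → K,
      (1 + z * T) * x 1 + (s * T ^ 2 + z * T ^ 4) * x 0 - z * x 2 = 0 →
      w * T * x 1 + (1 + y * T ^ 2 + w * T ^ 4) * x 0 - w * x 2 = 0 → x i = 0 → x = 0 := by
  have hext (x : Fin 3 → K) (h₀ : x 0 = 0) (h₁ : x 1 = 0) (h₂ : x 2 = 0) : x = 0 :=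
    funext <| Fin.forall_fin_succ.2 ⟨h₀, Fin.forall_fin_two.2 ⟨h₁, h₂⟩⟩
  by_cases hw : w = 0
  · subst hw
    have hx₀ {x : Fin 3 → K}
        (h₂ : 0 * T * x 1 + (1 + y * T ^ 2 + 0 * T ^ 4) * x 0 - 0 * x 2 = 0) : x 0 = 0 :=
      (mul_eq_zero.1 (by linear_combination h₂)).resolve_left
        (h.resolve_left (not_not_intro rfl))
    by_cases hz : z = 0
    · subst hz
      exact ⟨2, fun x h₁ h₂ hx =>
        hext x (hx₀ h₂) (by linear_combination h₁ - s * T ^ 2 * hx₀ h₂) hx⟩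
    · refine ⟨1, fun x h₁ h₂ hx => hext x (hx₀ h₂) hx <| mul_left_cancel₀ hz ?_⟩
      linear_combination (1 + z * T) * hx + (s * T ^ 2 + z * T ^ 4) * hx₀ h₂ - h₁
  · refine ⟨0, fun x h₁ h₂ hx => ?_⟩
    have hT : T * x 1 - x 2 = 0 := mul_left_cancel₀ hw <| by
      linear_combination h₂ - (1 + y * T ^ 2 + w * T ^ 4) * hx
    have hx₁ : x 1 = 0 := by
      linear_combination h₁ - z * hT - (s * T ^ 2 + z * T ^ 4) * hx
    exact hext x hx hx₁ (by linear_combination T * hx₁ - hT)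

theorem collinear_of_forall_equations {T s y z w : K} (h : w ≠ 0 ∨ 1 + y * T ^ 2 ≠ 0)
    {V : Set ((F × F) × F)}
    (hV : ∀ v ∈ V,
      (1 + z * T) * algebraMap F K v.1.2 + (s * T ^ 2 + z * T ^ 4) * algebraMap F K v.1.1 -
          z * algebraMap F K v.2 = s ∧
        w * T * algebraMap F K v.1.2 + (1 + y * T ^ 2 + w * T ^ 4) * algebraMap F K v.1.1 -
          w * algebraMap F K v.2 = y) :
    Collinear F V := by
  let ι := algebraMap F K
  let L : (F × F) × F →ₗ[F] K × K :=
    { toFun v := ((1 + z * T) * ι v.1.2 + (s * T ^ 2 + z * T ^ 4) * ι v.1.1 - z * ι v.2,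
        w * T * ι v.1.2 + (1 + y * T ^ 2 + w * T ^ 4) * ι v.1.1 - w * ι v.2)
      map_add' v w := by ext <;> simp <;> ring
      map_smul' r v := by ext <;> simp [Algebra.smul_def, ι] <;> ring }
  have hL : ∀ v ∈ V, L v = (s, y) := fun v hv => Prod.ext (hV v hv).1 (hV v hv).2
  obtain ⟨i, hi⟩ := exists_forall_eq_zero_of_equations (s := s) (z := z) h
  refine collinear_of_linearMap_eq L (![LinearMap.fst F _ _ ∘ₗ LinearMap.fst F _ _,
    LinearMap.snd F _ _ ∘ₗ LinearMap.fst F _ _, LinearMap.snd F _ _] i)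
    (fun v hv v' hv' => (hL v hv).trans (hL v' hv').symm) fun d hd hdi => ?_
  have hzero := hi ![ι d.1.1, ι d.1.2, ι d.2] (congrArg Prod.fst hd) (congrArg Prod.snd hd) (by
    fin_cases i <;> simpa using hdi)
  have hcoord : d.1.1 = 0 ∧ d.1.2 = 0 ∧ d.2 = 0 := by simpa [ι] using hzero
  exact Prod.ext (Prod.ext hcoord.1 hcoord.2.1) hcoord.2.2

theorem collinear_containsY_pointLine (hT : Transcendental F T) (S : BilinearSurface K) :
    Collinear F {v : (F × F) × F | S.ContainsY (pointLine T v)} := by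
  rcases Set.eq_empty_or_nonempty {v : (F × F) × F | S.ContainsY (pointLine T v)} with
    hempty | ⟨v, hv⟩
  · rw [hempty]
    exact collinear_empty F _
  refine collinear_of_forall_equations (T := T) ?_ fun u hu =>
    BilinearSurface.ContainsY.equations_pointLine hT hu
  by_contra! hdegenerate
  obtain ⟨hw, hy⟩ := hdegenerate
  have hzero : S.coeffY = 0 := by
    have hslope := (BilinearSurface.ContainsY.equations_pointLine hT hv).2
    rw [hw] at hslope
    linear_combination algebraMap F K v.1.1 * hy - hslope
  simp [hzero] at hy

open scoped Classical in
/-- **Rudnev's point–plane incidence bound.** -/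
theorem sum_card_onPlane_le {p k l : ℕ} [CharP F p] {P Q : Finset ((F × F) × F)}
    (hk : ∀ s ⊆ P, Collinear F (s : Set ((F × F) × F)) → #s ≤ k) (hp : 27 * #P < p ^ 2)
    (hl : #P ≤ 4 ^ l) :
    ∑ w ∈ Q, #{v ∈ P | OnPlane v w} ≤ 20 * 2 ^ l * #Q + k * (#Q + 4 ^ l) + 50006 * 8 ^ l := by
  have hT := RatFunc.transcendental_X (K := F)
  set T : RatFunc F := RatFunc.X
  have : CharP (RatFunc F) p := charP_of_injective_algebraMap (algebraMap F (RatFunc F)).injective p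
  have hpoint : Function.Injective (pointLine T (F := F)) :=
    fun v w h => base_pointLine_injective hT (congrArg CoordLine.base h)
  have hplane : Function.Injective (planeLine T (F := F)) :=
    fun v w h => base_planeLine_injective hT (congrArg CoordLine.base h)
  have hlines := CoordLine.incidences_le (I := P.image (pointLine T)) (J := Q.image (planeLine T))
    (p := p) (k := k) (l := l)
    (by simpa using (base_pointLine_injective hT).injOn.image_of_comp)
    (by simpa using (base_planeLine_injective hT).injOn.image_of_comp)
    (fun S => by
      rw [filter_image, card_image_of_injective _ hpoint]
      exact hk _ (filter_subset _ _) <| (collinear_containsY_pointLine hT S).subset fun v hv =>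
        (mem_filter.1 hv).2)
    (by rwa [card_image_of_injective _ hpoint]) (by rwa [card_image_of_injective _ hpoint])
  rw [card_image_of_injective _ hplane, CoordLine.incidences, sum_image hplane.injOn] at hlines
  simpa only [filter_image, card_image_of_injective _ hpoint, meets_pointLine_planeLine hT] using
    hlines

end PointPlane

section LineIncidences

section Collinear

variable {F V W : Type*} [Field F] [AddCommGroup V] [Module F V] [AddCommGroup W] [Module F W]

theorem injOn_or_forall_eq_of_collinear (f : V →ₗ[F] W) {s : Set V} (h : Collinear F s) :
    Set.InjOn f s ∨ ∀ v ∈ s, ∀ w ∈ s, f v = f w := by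
  obtain ⟨p₀, d, hd⟩ := (collinear_iff_exists_forall_eq_smul_vadd s).1 h
  by_cases hfd : f d = 0
  · refine .inr fun v hv w hw => ?_
    obtain ⟨r, rfl⟩ := hd v hv
    obtain ⟨r', rfl⟩ := hd w hw
    simp [hfd]
  · refine .inl fun v hv w hw hvw => ?_
    obtain ⟨r, rfl⟩ := hd v hv
    obtain ⟨r', rfl⟩ := hd w hw
    have hrr' : r = r' := smul_left_injective F hfd (by simpa using hvw)
    rw [hrr']

theorem collinear_image_of_collinear (f : V →ₗ[F] W) {s : Set V} (h : Collinear F s) :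
    Collinear F (f '' s) := by
  obtain ⟨p₀, d, hd⟩ := (collinear_iff_exists_forall_eq_smul_vadd s).1 h
  refine (collinear_iff_exists_forall_eq_smul_vadd _).2 ⟨f p₀, f d, ?_⟩
  rintro _ ⟨v, hv, rfl⟩
  obtain ⟨r, rfl⟩ := hd v hv
  exact ⟨r, by simp⟩

theorem card_le_of_collinear_of_subset_product {L : Finset V} {S : Finset W} {k : ℕ}
    (hL : ∀ s ⊆ L, Collinear F (s : Set V) → #s ≤ k) (hS : #S ≤ k) {T : Finset (V × W)}
    (hT : T ⊆ L ×ˢ S) (h : Collinear F (T : Set (V × W))) : #T ≤ k := by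
  classical
  obtain hinj | hconst := injOn_or_forall_eq_of_collinear (LinearMap.snd F V W) h
  · exact (card_le_card_of_injOn _ (fun v hv => (mem_product.1 (hT hv)).2) hinj).trans hS
  · have hfst : Set.InjOn Prod.fst (T : Set (V × W)) := fun v hv w hw hvw =>
      Prod.ext hvw (hconst v hv w hw)
    rw [← card_image_of_injOn hfst]
    refine hL _ (image_subset_iff.2 fun v hv => (mem_product.1 (hT hv)).1) ?_
    rw [coe_image]
    exact collinear_image_of_collinear (LinearMap.fst F V W) h

end Collinear

/-- The number of incidences between the lines `y = v.1 * x + v.2`, `v ∈ L`, and the points of the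
grid `S ×ˢ B`, counted through the `x`-coordinate. -/
def lineIncidences {F : Type*} [Add F] [Mul F] [DecidableEq F] (L : Finset (F × F))
    (S B : Finset F) : ℕ :=
  #{q ∈ L ×ˢ S | q.1.1 * q.2 + q.1.2 ∈ B}

theorem sq_card_filter_mem_le {α β : Type*} [DecidableEq β] (Q : Finset α) (B : Finset β)
    (f : α → β) : #{q ∈ Q | f q ∈ B} ^ 2 ≤ #B * ∑ q ∈ Q, #{q' ∈ Q | f q' = f q} := by
  have hfiber : #{q ∈ Q | f q ∈ B} = ∑ b ∈ B, #{q ∈ Q | f q = b} := by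
    simp only [card_eq_sum_ones, sum_fiberwise_eq_sum_filter]
  calc #{q ∈ Q | f q ∈ B} ^ 2 ≤ #B * ∑ b ∈ B, #{q ∈ Q | f q = b} ^ 2 :=
        hfiber ▸ sq_sum_le_card_mul_sum_sq
    _ = #B * ∑ b ∈ B, ∑ q ∈ Q with f q = b, #{q' ∈ Q | f q' = f q} := by
        congr 1
        refine sum_congr rfl fun b _ => ?_
        rw [sum_congr rfl fun q hq => by rw [(mem_filter.1 hq).2], sum_const, smul_eq_mul, sq]
    _ = #B * ∑ q ∈ Q with f q ∈ B, #{q' ∈ Q | f q' = f q} := by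
        rw [sum_fiberwise_eq_sum_filter]
    _ ≤ #B * ∑ q ∈ Q, #{q' ∈ Q | f q' = f q} :=
        Nat.mul_le_mul_left _ (sum_le_sum_of_subset (filter_subset _ _))

open scoped Classical in
theorem sq_lineIncidences_le_card_mul_sum_onPlane {F : Type*} [Add F] [Mul F] [DecidableEq F]
    (L : Finset (F × F)) (S B : Finset F) :
    lineIncidences L S B ^ 2 ≤ #B * ∑ w ∈ L ×ˢ S, #{v ∈ L ×ˢ S | OnPlane v w} := by
  refine (sq_card_filter_mem_le (L ×ˢ S) B fun q => q.1.1 * q.2 + q.1.2).trans_eq ?_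
  congr 1
  simp only [card_filter, sum_product]
  refine sum_congr rfl fun w _ => ?_
  rw [sum_comm]
  conv_rhs => rw [sum_comm]
  refine sum_congr rfl fun v _ => ?_
  rw [sum_comm]
  exact sum_congr rfl fun _ _ => sum_congr rfl fun _ _ => if_congr Iff.rfl rfl rfl

theorem exists_le_four_pow_and_two_pow_le {n : ℕ} (hn : n ≠ 0) :
    ∃ l, n ≤ 4 ^ l ∧ (2 : ℝ) ^ l ≤ 2 * √n := by
  refine ⟨Nat.log 4 n + 1, (Nat.lt_pow_succ_log_self (by norm_num) n).le, ?_⟩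
  have hlog : (4 : ℝ) ^ Nat.log 4 n ≤ n := mod_cast Nat.pow_log_le_self 4 hn
  rw [pow_succ']
  gcongr
  refine Real.le_sqrt_of_sq_le ?_
  rw [← pow_mul', pow_mul]
  norm_num [hlog]

theorem sq_lineIncidences_le {F : Type*} [Field F] [DecidableEq F] {p k : ℕ} [CharP F p]
    {L : Finset (F × F)} {S : Finset F} (B : Finset F)
    (hL : ∀ s ⊆ L, Collinear F (s : Set (F × F)) → #s ≤ k) (hS : #S ≤ k)
    (hp : 27 * (#L * #S) < p ^ 2) :
    (lineIncidences L S B : ℝ) ^ 2 ≤ 500000 * #B * (√(#L * #S) + k) * (#L * #S) := by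
  classical
  obtain ⟨n, hn⟩ : ∃ n, n = #L * #S := ⟨_, rfl⟩
  rw [← card_product] at hp
  obtain rfl | hn₀ := eq_or_ne n 0
  · have hempty : L ×ˢ S = ∅ := by rw [← card_eq_zero, card_product, ← hn]
    have hn' : (#L * #S : ℝ) = 0 := mod_cast hn.symm
    simp [lineIncidences, hempty, hn']
  obtain ⟨l, hl, h2⟩ := exists_le_four_pow_and_two_pow_le hn₀
  have hplane := (sq_lineIncidences_le_card_mul_sum_onPlane L S B).trans <| Nat.mul_le_mul_left _ <|
    sum_card_onPlane_le (P := L ×ˢ S) (Q := L ×ˢ S) (l := l)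
      (fun T hT => card_le_of_collinear_of_subset_product hL hS hT) hp (by
        rwa [card_product, ← hn])
  rw [card_product, ← hn] at hplane
  have hnr : (#L * #S : ℝ) = n := mod_cast hn.symm
  rw [hnr]
  have hsqrt : √(n : ℝ) ^ 2 = n := Real.sq_sqrt n.cast_nonneg
  have h4 : (4 : ℝ) ^ l ≤ 4 * n := by
    calc (4 : ℝ) ^ l = (2 ^ l) ^ 2 := by rw [← pow_mul', pow_mul]; norm_num
      _ ≤ (2 * √n) ^ 2 := by gcongr
      _ = 4 * n := by rw [mul_pow, hsqrt]; norm_num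
  have h8 : (8 : ℝ) ^ l ≤ 8 * (√n * n) := by
    calc (8 : ℝ) ^ l = 2 ^ l * 4 ^ l := by rw [← mul_pow]; norm_num
      _ ≤ 2 * √n * (4 * n) := by gcongr
      _ = 8 * (√n * n) := by ring
  calc (lineIncidences L S B : ℝ) ^ 2
      ≤ #B * (20 * 2 ^ l * n + k * (n + 4 ^ l) + 50006 * 8 ^ l) := mod_cast hplane
    _ ≤ #B * (20 * (2 * √n) * n + k * (n + 4 * n) + 50006 * (8 * (√n * n))) := by gcongr
    _ ≤ #B * (500000 * (√n + k) * n) := by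
        gcongr
        have : 0 ≤ √(n : ℝ) * n := by positivity
        have : 0 ≤ (k : ℝ) * n := by positivity
        linarith
    _ = 500000 * #B * (√n + k) * n := by ring

section Vinh

variable {F : Type*} [Field F]

theorem eq_of_two_points_on_line {q q' v w : F × F} (hqq' : q ≠ q')
    (hv : v.1 * q.1 + v.2 = q.2) (hv' : v.1 * q'.1 + v.2 = q'.2)
    (hw : w.1 * q.1 + w.2 = q.2) (hw' : w.1 * q'.1 + w.2 = q'.2) : v = w := by
  have hfst : q.1 ≠ q'.1 := fun h => hqq' <| Prod.ext h <| by
    linear_combination v.1 * h - hv + hv'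
  have hslope : v.1 = w.1 := mul_right_cancel₀ (sub_ne_zero.2 hfst) <| by
    linear_combination hv - hv' - hw + hw'
  exact Prod.ext hslope <| by linear_combination hv - hw - q.1 * hslope

variable [DecidableEq F]

theorem lineIncidences_eq_sum (L : Finset (F × F)) (S B : Finset F) :
    lineIncidences L S B = ∑ v ∈ L, #{q ∈ S ×ˢ B | v.1 * q.1 + v.2 = q.2} := by
  simp only [lineIncidences, card_filter, sum_product, sum_ite_eq]

variable [Fintype F]

theorem card_lines_through (q : F × F) :
    #{v : F × F | v.1 * q.1 + v.2 = q.2} = Fintype.card F := by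
  rw [← card_univ]
  refine card_bij' (fun v _ => v.1) (fun m _ => (m, q.2 - m * q.1)) ?_ ?_ ?_ ?_
  · simp
  · simp
  · intro v hv
    refine Prod.ext rfl ?_
    simp [← (mem_filter.1 hv).2]
  · simp

theorem card_lines_through_both_le (q q' : F × F) :
    #{v : F × F | v.1 * q.1 + v.2 = q.2 ∧ v.1 * q'.1 + v.2 = q'.2} ≤
      (if q = q' then Fintype.card F else 0) + 1 := by
  split_ifs with h
  · subst h
    simp [card_lines_through]
  · rw [zero_add, card_le_one]
    intro v hv w hw
    simp only [mem_filter, mem_univ, true_and] at hv hw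
    exact eq_of_two_points_on_line h hv.1 hv.2 hw.1 hw.2

theorem sum_card_points_on_line (Q : Finset (F × F)) :
    ∑ v : F × F, #{q ∈ Q | v.1 * q.1 + v.2 = q.2} = Fintype.card F * #Q := by
  refine (sum_card_bipartiteAbove_eq_sum_card_bipartiteBelow
    fun v q : F × F => v.1 * q.1 + v.2 = q.2).trans ?_
  simp only [bipartiteBelow, card_lines_through, sum_const, smul_eq_mul]
  exact mul_comm _ _

theorem sum_sq_card_points_on_line_le (Q : Finset (F × F)) :
    ∑ v : F × F, #{q ∈ Q | v.1 * q.1 + v.2 = q.2} ^ 2 ≤ Fintype.card F * #Q + #Q ^ 2 := by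
  calc ∑ v : F × F, #{q ∈ Q | v.1 * q.1 + v.2 = q.2} ^ 2
      = ∑ v : F × F, #{r ∈ Q ×ˢ Q | v.1 * r.1.1 + v.2 = r.1.2 ∧ v.1 * r.2.1 + v.2 = r.2.2} := by
        refine sum_congr rfl fun v _ => ?_
        rw [sq, ← card_product, filter_product (fun q : F × F => v.1 * q.1 + v.2 = q.2)
          fun q : F × F => v.1 * q.1 + v.2 = q.2]
    _ = ∑ r ∈ Q ×ˢ Q, #{v : F × F | v.1 * r.1.1 + v.2 = r.1.2 ∧ v.1 * r.2.1 + v.2 = r.2.2} :=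
        sum_card_bipartiteAbove_eq_sum_card_bipartiteBelow
          fun (v : F × F) (r : (F × F) × F × F) =>
            v.1 * r.1.1 + v.2 = r.1.2 ∧ v.1 * r.2.1 + v.2 = r.2.2
    _ ≤ ∑ r ∈ Q ×ˢ Q, ((if r.1 = r.2 then Fintype.card F else 0) + 1) :=
        sum_le_sum fun r _ => card_lines_through_both_le r.1 r.2
    _ = Fintype.card F * #Q + #Q ^ 2 := by
        simp [sum_add_distrib, sum_product, sq, mul_comm]

theorem sum_sq_card_points_on_line_sub_le (Q : Finset (F × F)) :
    ∑ v : F × F, (#{q ∈ Q | v.1 * q.1 + v.2 = q.2} - #Q / Fintype.card F : ℝ) ^ 2 ≤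
      Fintype.card F * #Q := by
  have hF : (Fintype.card F : ℝ) ≠ 0 := mod_cast Fintype.card_ne_zero
  have hmean : ∑ v : F × F, (#{q ∈ Q | v.1 * q.1 + v.2 = q.2} : ℝ) = Fintype.card F * #Q :=
    mod_cast sum_card_points_on_line Q
  have hsq : ∑ v : F × F, (#{q ∈ Q | v.1 * q.1 + v.2 = q.2} : ℝ) ^ 2 ≤
      Fintype.card F * #Q + #Q ^ 2 := mod_cast sum_sq_card_points_on_line_le Q
  simp only [sub_sq, sum_add_distrib, sum_sub_distrib, ← sum_mul, ← mul_sum, hmean, sum_const,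
    card_univ, Fintype.card_prod, nsmul_eq_mul]
  push_cast
  calc _ = ∑ v : F × F, (#{q ∈ Q | v.1 * q.1 + v.2 = q.2} : ℝ) ^ 2 - #Q ^ 2 := by
        field_simp
        ring
    _ ≤ Fintype.card F * #Q := by linarith

theorem sq_lineIncidences_sub_le (L : Finset (F × F)) (S B : Finset F) :
    (lineIncidences L S B - #L * #S * #B / Fintype.card F : ℝ) ^ 2 ≤
      Fintype.card F * (#L * #S * #B) := by
  have hdev : (lineIncidences L S B - #L * #S * #B / Fintype.card F : ℝ) =
      ∑ v ∈ L, (#{q ∈ S ×ˢ B | v.1 * q.1 + v.2 = q.2} - #(S ×ˢ B) / Fintype.card F : ℝ) := by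
    simp only [lineIncidences_eq_sum, sum_sub_distrib, sum_const, nsmul_eq_mul, card_product]
    push_cast
    ring
  rw [hdev]
  refine sq_sum_le_card_mul_sum_sq.trans ?_
  calc _ ≤ #L * ∑ v : F × F,
          (#{q ∈ S ×ˢ B | v.1 * q.1 + v.2 = q.2} - #(S ×ˢ B) / Fintype.card F : ℝ) ^ 2 := by
        gcongr
        exact subset_univ L
    _ ≤ #L * (Fintype.card F * #(S ×ˢ B)) := by
        gcongr
        exact sum_sq_card_points_on_line_sub_le _
    _ = Fintype.card F * (#L * #S * #B) := by
        rw [card_product]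
        push_cast
        ring

end Vinh

theorem lineIncidences_lt_or_sq_le {p k : ℕ} [Fact p.Prime] {L : Finset (ZMod p × ZMod p)}
    {S : Finset (ZMod p)} (B : Finset (ZMod p))
    (hL : ∀ s ⊆ L, Collinear (ZMod p) (s : Set (ZMod p × ZMod p)) → #s ≤ k) (hS : #S ≤ k) :
    (lineIncidences L S B : ℝ) < 2 * (#L * #S * #B / p) ∨
      (lineIncidences L S B : ℝ) ^ 2 ≤ 500000 * #B * (√(#L * #S) + k) * (#L * #S) := by
  obtain hp | hp := lt_or_ge (27 * (#L * #S)) (p ^ 2)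
  · exact .inr (sq_lineIncidences_le B hL hS hp)
  rw [or_iff_not_imp_left, not_lt]
  intro hmain
  have hp' : (p : ℝ) ≤ 6 * √(#L * #S) := by
    refine le_of_sq_le_sq ?_ (by positivity)
    rw [mul_pow, Real.sq_sqrt (by positivity)]
    have : (p ^ 2 : ℝ) ≤ 27 * (#L * #S) := mod_cast hp
    have : (0 : ℝ) ≤ #L * #S := by positivity
    linarith
  have hvinh := sq_lineIncidences_sub_le L S B
  rw [ZMod.card] at hvinh
  calc (lineIncidences L S B : ℝ) ^ 2
      ≤ (2 * (lineIncidences L S B - #L * #S * #B / p) : ℝ) ^ 2 := by gcongr; linarith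
    _ ≤ (4 * (p * (#L * #S * #B)) : ℝ) := by linarith
    _ ≤ 4 * (6 * √(#L * #S) * (#L * #S * #B)) := by gcongr
    _ ≤ 500000 * #B * (√(#L * #S) + k) * (#L * #S) := by
        have : (0 : ℝ) ≤ #B * √(#L * #S) * (#L * #S) := by positivity
        have : (0 : ℝ) ≤ #B * k * (#L * #S) := by positivity
        linarith

end LineIncidences

section RichQuotients

section LineFamily

variable {F : Type*}

/-- The lines `y = m * x + e` with slope `m ∈ Λ` and intercept `e ∈ E m`, each encoded as
`(m, e)`. -/
def lineFamily (Λ : Finset F) (E : F → Finset F) : Finset (F × F) :=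
  (Λ.sigma E).map (Equiv.sigmaEquivProd F F).toEmbedding

theorem mem_lineFamily {Λ : Finset F} {E : F → Finset F} {v : F × F} :
    v ∈ lineFamily Λ E ↔ v.1 ∈ Λ ∧ v.2 ∈ E v.1 := by
  simp [lineFamily, mem_map_equiv]

theorem card_lineFamily (Λ : Finset F) (E : F → Finset F) :
    #(lineFamily Λ E) = ∑ m ∈ Λ, #(E m) := by
  rw [lineFamily, card_map, card_sigma]

theorem lineIncidences_lineFamily [Add F] [Mul F] [DecidableEq F] (Λ : Finset F)
    (E : F → Finset F) (S B : Finset F) :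
    lineIncidences (lineFamily Λ E) S B = ∑ m ∈ Λ, ∑ e ∈ E m, #{x ∈ S | m * x + e ∈ B} := by
  simp only [lineIncidences, lineFamily, card_filter, sum_product, sum_map, sum_sigma,
    Equiv.coe_toEmbedding, Equiv.sigmaEquivProd_apply]

theorem card_le_of_collinear_of_subset_lineFamily [Field F] {Λ : Finset F} {E : F → Finset F}
    {x : ℕ} (hE : ∀ m ∈ Λ, #(E m) ≤ x) {s : Finset (F × F)} (hs : s ⊆ lineFamily Λ E)
    (h : Collinear F (s : Set (F × F))) : #s ≤ x + #Λ := by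
  obtain hinj | hconst := injOn_or_forall_eq_of_collinear (LinearMap.fst F F F) h
  · have : #s ≤ #Λ := card_le_card_of_injOn _ (fun v hv => (mem_lineFamily.1 (hs hv)).1) hinj
    lia
  obtain rfl | ⟨v, hv⟩ := s.eq_empty_or_nonempty
  · simp
  have : #s ≤ #(E v.1) := by
    refine card_le_card_of_injOn Prod.snd (fun w hw => ?_) fun w hw w' hw' hww' =>
      Prod.ext (hconst w hw w' hw') hww'
    have hwv : w.1 = v.1 := hconst w hw v hv
    exact hwv ▸ (mem_lineFamily.1 (hs hw)).2
  exact (this.trans (hE _ (mem_lineFamily.1 (hs hv)).1)).trans (Nat.le_add_right _ _)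

theorem lineIncidences_lineFamily_lt_or_sq_le {p x : ℕ} [Fact p.Prime] {Λ : Finset (ZMod p)}
    {E : ZMod p → Finset (ZMod p)} {S : Finset (ZMod p)} (B : Finset (ZMod p))
    (hE : ∀ m ∈ Λ, #(E m) ≤ x) (hS : #S ≤ x) :
    (lineIncidences (lineFamily Λ E) S B : ℝ) < 2 * (#(lineFamily Λ E) * #S * #B / p) ∨
      (lineIncidences (lineFamily Λ E) S B : ℝ) ^ 2 ≤
        500000 * #B * (√(#(lineFamily Λ E) * #S) + (x + #Λ)) * (#(lineFamily Λ E) * #S) := by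
  simpa using lineIncidences_lt_or_sq_le B
    (fun s hs h => card_le_of_collinear_of_subset_lineFamily hE hs h)
    (hS.trans (Nat.le_add_right x #Λ))

end LineFamily

/-- The number of representations of `m` as a quotient of two elements of `A`, with the division
cleared, so that `m` is represented by `(0, 0)` whenever `0 ∈ A`. -/
def quotientCount {F : Type*} [Mul F] [DecidableEq F] (A : Finset F) (m : F) : ℕ :=
  #{q ∈ A ×ˢ A | q.1 = m * q.2}

section Sums

variable {F : Type*} [CommRing F] [DecidableEq F]

theorem quotientCount_le_card_filter_add {A : Finset F} {m e : F} (he : e ∈ A - m • A) :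
    quotientCount A m ≤ #{x ∈ A + A | m * x + e ∈ A + A} := by
  obtain ⟨a, ha, _, hmb, rfl⟩ := mem_sub.1 he
  obtain ⟨b, hb, rfl⟩ := mem_smul_finset.1 hmb
  refine card_le_card_of_injOn (fun q => b + q.2) ?_ ?_
  · intro q hq
    simp only [coe_filter, mem_product, Set.mem_ofPred_eq] at hq ⊢
    refine ⟨add_mem_add hb hq.1.2, ?_⟩
    rw [show m * (b + q.2) + (a - m • b) = a + q.1 by rw [hq.2, smul_eq_mul]; ring]
    exact add_mem_add ha hq.1.1
  · intro q hq r hr hqr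
    simp only [coe_filter, Set.mem_ofPred_eq] at hq hr
    have hsnd : q.2 = r.2 := add_left_cancel hqr
    exact Prod.ext (by rw [hq.2, hr.2, hsnd]) hsnd

theorem sq_card_le_sum_card_filter (A : Finset F) (m : F) :
    #A ^ 2 ≤ ∑ e ∈ A - m • A, #{x ∈ A | m * x + e ∈ A} := by
  have hmaps : ∀ q ∈ A ×ˢ A, q.1 - m * q.2 ∈ A - m • A := fun q hq =>
    sub_mem_sub (mem_product.1 hq).1 (smul_mem_smul_finset (mem_product.1 hq).2)
  rw [sq, ← card_product, card_eq_sum_card_fiberwise hmaps]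
  refine sum_le_sum fun e _ => card_le_card_of_injOn Prod.snd ?_ ?_
  · intro q hq
    simp only [coe_filter, mem_product, Set.mem_ofPred_eq] at hq ⊢
    refine ⟨hq.1.2, ?_⟩
    rw [← hq.2, add_sub_cancel]
    exact hq.1.1
  · intro q hq r hr hqr
    simp only [coe_filter, Set.mem_ofPred_eq] at hq hr
    exact Prod.ext (by linear_combination hq.2 - hr.2 + m * hqr) hqr

theorem mul_card_lineFamily_le_lineIncidences {A Λ : Finset F} {E : F → Finset F} {t : ℕ}
    (hΛ : ∀ m ∈ Λ, t ≤ quotientCount A m) (hE : ∀ m ∈ Λ, E m ⊆ A - m • A) :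
    t * #(lineFamily Λ E) ≤ lineIncidences (lineFamily Λ E) (A + A) (A + A) := by
  calc t * #(lineFamily Λ E) = ∑ m ∈ Λ, ∑ _e ∈ E m, t := by
        simp only [card_lineFamily, mul_sum, sum_const, smul_eq_mul, mul_comm]
    _ ≤ ∑ m ∈ Λ, ∑ e ∈ E m, #{x ∈ A + A | m * x + e ∈ A + A} :=
        sum_le_sum fun m hm => sum_le_sum fun e he =>
          (hΛ m hm).trans (quotientCount_le_card_filter_add (hE m hm he))
    _ = lineIncidences (lineFamily Λ E) (A + A) (A + A) := (lineIncidences_lineFamily ..).symm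

theorem sq_card_mul_card_le_lineIncidences (A Λ : Finset F) :
    #A ^ 2 * #Λ ≤ lineIncidences (lineFamily Λ fun m => A - m • A) A A := by
  rw [lineIncidences_lineFamily, mul_comm, ← smul_eq_mul, ← sum_const]
  exact sum_le_sum fun m _ => sq_card_le_sum_card_filter A m

end Sums

theorem le_three_mul_of_le_add {a u v w : ℝ} (h : a ≤ u + v + w) :
    a ≤ 3 * u ∨ a ≤ 3 * v ∨ a ≤ 3 * w := by
  by_contra! hlt
  linarith

theorem rich_bound_of_sq_mul_le {ν x t b : ℝ} (hν : 0 < ν) (hx : 0 < x) (hb : 0 ≤ b)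
    (h : t ^ 2 * (ν * x) ≤ 500000 * b ^ 2 * (√(ν * x * b) + (x + ν))) :
    ν * x * t ^ 4 ≤ 1500000 ^ 2 * b ^ 5 ∨ ν * t ^ 2 ≤ 1500000 * b ^ 2 ∨
      x * t ^ 2 ≤ 1500000 * b ^ 2 := by
  have hsqrt : √(ν * x * b) ^ 2 = ν * x * b := Real.sq_sqrt (by positivity)
  obtain h | h | h := le_three_mul_of_le_add (a := t ^ 2 * (ν * x))
    (u := 500000 * b ^ 2 * √(ν * x * b)) (v := 500000 * b ^ 2 * x) (w := 500000 * b ^ 2 * ν)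
    (by linarith)
  · left
    refine le_of_mul_le_mul_right ?_ (mul_pos hν hx)
    calc ν * x * t ^ 4 * (ν * x) = (t ^ 2 * (ν * x)) ^ 2 := by ring
      _ ≤ (3 * (500000 * b ^ 2 * √(ν * x * b))) ^ 2 := by gcongr
      _ = 1500000 ^ 2 * b ^ 4 * √(ν * x * b) ^ 2 := by ring
      _ = 1500000 ^ 2 * b ^ 5 * (ν * x) := by rw [hsqrt]; ring
  · exact .inr (.inl (le_of_mul_le_mul_right (by linarith) hx))
  · exact .inr (.inr (le_of_mul_le_mul_right (by linarith) hν))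

theorem rich_bound_of_le_quotientCount {p : ℕ} [Fact p.Prime] {A Λ : Finset (ZMod p)} {t x : ℕ}
    (hΛ : ∀ m ∈ Λ, t ≤ quotientCount A m) (hx : ∀ m ∈ Λ, x ≤ #(A - m • A))
    (hAx : #(A + A) ≤ x) (htp : 2 * (#(A + A) : ℝ) ^ 2 ≤ t * p) :
    (#Λ * x * t ^ 4 : ℝ) ≤ 1500000 ^ 2 * #(A + A) ^ 5 ∨
      (#Λ * t ^ 2 : ℝ) ≤ 1500000 * #(A + A) ^ 2 ∨
      (x * t ^ 2 : ℝ) ≤ 1500000 * #(A + A) ^ 2 := by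
  choose! E hE hEcard using fun m hm => exists_subset_card_eq (hx m hm)
  obtain ⟨L, hL⟩ : ∃ L, L = lineFamily Λ E := ⟨_, rfl⟩
  have hcard : (#L : ℝ) = #Λ * x := by
    rw [hL, card_lineFamily, sum_congr rfl hEcard]
    simp
  have hI : (t * #L : ℝ) ≤ lineIncidences L (A + A) (A + A) := by
    subst hL
    exact mod_cast mul_card_lineFamily_le_lineIncidences hΛ hE
  obtain hΛ₀ | hΛ₀ := (#Λ).eq_zero_or_pos
  · left
    rw [hΛ₀]
    simp only [CharP.cast_eq_zero, zero_mul]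
    positivity
  obtain rfl | hx₀ := x.eq_zero_or_pos
  · left
    simp only [CharP.cast_eq_zero, mul_zero, zero_mul]
    positivity
  have hp : (0 : ℝ) < p := mod_cast (Fact.out : p.Prime).pos
  have hN : (0 : ℝ) < #L := by rw [hcard]; positivity
  have hinc := lineIncidences_lineFamily_lt_or_sq_le (A + A) (fun m hm => (hEcard m hm).le) hAx
  rw [← hL] at hinc
  obtain hlt | hsq := hinc
  · refine absurd hlt (not_lt.2 (le_trans ?_ hI))
    rw [← mul_div_assoc, div_le_iff₀ hp]
    calc (2 * (#L * #(A + A) * #(A + A)) : ℝ) = #L * (2 * #(A + A) ^ 2) := by ring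
      _ ≤ #L * (t * p) := by gcongr
      _ = t * #L * p := by ring
  refine rich_bound_of_sq_mul_le (by positivity) (by positivity) (by positivity) ?_
  rw [← hcard]
  refine le_of_mul_le_mul_right ?_ hN
  calc (t ^ 2 * #L * #L : ℝ) = (t * #L) ^ 2 := by ring
    _ ≤ lineIncidences L (A + A) (A + A) ^ 2 := by gcongr
    _ ≤ _ := hsq
    _ = _ := by ring

theorem rich_bound_of_sq_card_mul_le {a ν x : ℝ} (ha : 0 < a) (hν : 0 < ν) (hax : a ≤ x)
    (hνa : ν ≤ a ^ 3) (h : a ^ 2 * ν ≤ 500000 * (√(ν * x * a) + (x + ν)) * x) :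
    ν * a ^ 3 ≤ 1500000 ^ 3 * x ^ 3 := by
  have hx : 0 < x := ha.trans_le hax
  have hsqrt : √(ν * x * a) ^ 2 = ν * x * a := Real.sq_sqrt (by positivity)
  obtain h | h | h := le_three_mul_of_le_add (a := a ^ 2 * ν)
    (u := 500000 * √(ν * x * a) * x) (v := 500000 * x * x) (w := 500000 * ν * x) (by linarith)
  · refine le_of_mul_le_mul_right ?_ (mul_pos ha hν)
    calc ν * a ^ 3 * (a * ν) = (a ^ 2 * ν) ^ 2 := by ring
      _ ≤ (3 * (500000 * √(ν * x * a) * x)) ^ 2 := by gcongr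
      _ = 1500000 ^ 2 * √(ν * x * a) ^ 2 * x ^ 2 := by ring
      _ = 1500000 ^ 2 * x ^ 3 * (a * ν) := by rw [hsqrt]; ring
      _ ≤ 1500000 ^ 3 * x ^ 3 * (a * ν) := by gcongr <;> norm_num
  · calc ν * a ^ 3 = a ^ 2 * ν * a := by ring
      _ ≤ 3 * (500000 * x * x) * x := by gcongr
      _ = 1500000 * x ^ 3 := by ring
      _ ≤ 1500000 ^ 3 * x ^ 3 := by gcongr; norm_num
  · have hax' : a ^ 2 ≤ 1500000 * x := le_of_mul_le_mul_right (by linarith) hν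
    calc ν * a ^ 3 ≤ a ^ 3 * a ^ 3 := by gcongr
      _ = (a ^ 2) ^ 3 := by ring
      _ ≤ (1500000 * x) ^ 3 := by gcongr
      _ = 1500000 ^ 3 * x ^ 3 := by ring

theorem rich_bound_of_card_sub_le {p : ℕ} [Fact p.Prime] {A Λ : Finset (ZMod p)} {x : ℕ}
    (hx : ∀ m ∈ Λ, #(A - m • A) ≤ x) (hAx : #A ≤ x) (hxp : 2 * x ≤ p) (hΛA : #Λ ≤ #A ^ 3) :
    (#Λ * #A ^ 3 : ℝ) ≤ 1500000 ^ 3 * x ^ 3 := by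
  obtain ⟨L, hL⟩ : ∃ L, L = lineFamily Λ fun m => A - m • A := ⟨_, rfl⟩
  have hcard : (#L : ℝ) ≤ #Λ * x := by
    rw [hL, card_lineFamily]
    exact mod_cast (sum_le_card_nsmul _ _ _ hx).trans_eq (smul_eq_mul ..)
  have hI : (#A ^ 2 * #Λ : ℝ) ≤ lineIncidences L A A := by
    rw [hL]
    exact mod_cast sq_card_mul_card_le_lineIncidences A Λ
  obtain hΛ₀ | hΛ₀ := (#Λ).eq_zero_or_pos
  · rw [hΛ₀]
    simp only [CharP.cast_eq_zero, zero_mul]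
    positivity
  obtain hA₀ | hA₀ := (#A).eq_zero_or_pos
  · rw [hA₀]
    simp only [CharP.cast_eq_zero, ne_eq, OfNat.ofNat_ne_zero, not_false_eq_true, zero_pow,
      mul_zero]
    positivity
  have hp : (0 : ℝ) < p := mod_cast (Fact.out : p.Prime).pos
  have hinc := lineIncidences_lineFamily_lt_or_sq_le A hx hAx
  rw [← hL] at hinc
  obtain hlt | hsq := hinc
  · refine absurd hlt (not_lt.2 (le_trans ?_ hI))
    rw [← mul_div_assoc, div_le_iff₀ hp]
    calc (2 * (#L * #A * #A) : ℝ) ≤ 2 * (#Λ * x * #A * #A) := by gcongr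
      _ = #A ^ 2 * #Λ * (2 * x) := by ring
      _ ≤ #A ^ 2 * #Λ * p := by gcongr; exact mod_cast hxp
  refine rich_bound_of_sq_card_mul_le (by positivity) (by positivity) (mod_cast hAx)
    (mod_cast hΛA) (le_of_mul_le_mul_right ?_ (by positivity : (0 : ℝ) < #A ^ 2 * #Λ))
  calc (#A ^ 2 * #Λ * (#A ^ 2 * #Λ) : ℝ) = (#A ^ 2 * #Λ) ^ 2 := by ring
    _ ≤ lineIncidences L A A ^ 2 := by gcongr
    _ ≤ _ := hsq
    _ ≤ 500000 * #A * (√(#Λ * x * #A) + (x + #Λ)) * (#Λ * x * #A) := by gcongr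
    _ = 500000 * (√(#Λ * x * #A) + (x + #Λ)) * x * (#A ^ 2 * #Λ) := by ring

end RichQuotients

section QuotientCount

variable {F : Type*} [DecidableEq F]

theorem quotientCount_le_card [Mul F] (A : Finset F) (m : F) : quotientCount A m ≤ #A := by
  refine card_le_card_of_injOn Prod.snd (fun q hq => ?_) fun q hq q' hq' h => ?_
  · exact (mem_product.1 (mem_filter.1 hq).1).2
  · replace h : q.2 = q'.2 := h
    exact Prod.ext (by rw [(mem_filter.1 hq).2, (mem_filter.1 hq').2, h]) h

theorem sum_quotientCount [Field F] [Fintype F] {A : Finset F} (hA : 0 ∉ A) :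
    ∑ m, quotientCount A m = #A ^ 2 := by
  rw [sq, ← card_product, card_eq_sum_card_fiberwise (t := univ)
    fun (q : F × F) _ => mem_coe.2 (mem_univ (q.1 / q.2))]
  refine sum_congr rfl fun m _ => congrArg card (filter_congr fun q hq => ?_)
  rw [div_eq_iff (ne_of_mem_of_not_mem (mem_product.1 hq).2 hA)]

theorem card_filter_le_quotientCount_le [Field F] [Fintype F] {A : Finset F} (hA : 0 ∉ A) {t : ℕ}
    (ht : 1 ≤ t) : #{m | t ≤ quotientCount A m} ≤ #A ^ 2 :=
  calc #{m | t ≤ quotientCount A m} ≤ ∑ m with t ≤ quotientCount A m, quotientCount A m :=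
        (card_eq_sum_ones _).trans_le (sum_le_sum fun _ hm => ht.trans (mem_filter.1 hm).2)
    _ ≤ ∑ m, quotientCount A m := sum_le_sum_of_subset (subset_univ _)
    _ = #A ^ 2 := sum_quotientCount hA

theorem card_filter_equal_quotients_le [Field F] [Fintype F] {A : Finset F} (hA : 0 ∉ A) :
    #{t ∈ A ×ˢ A ×ˢ A ×ˢ A ×ˢ A ×ˢ A |
      t.1 * t.2.2.2.2.1 = t.2.1 * t.2.2.2.1 ∧ t.2.1 * t.2.2.2.2.2 = t.2.2.1 * t.2.2.2.2.1} ≤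
      ∑ m, quotientCount A m ^ 3 := by
  rw [card_eq_sum_card_fiberwise (t := univ)
    fun (t : F × F × F × F × F × F) _ => mem_coe.2 (mem_univ (t.1 / t.2.2.2.1))]
  refine sum_le_sum fun m _ => ?_
  obtain ⟨R, hR⟩ : ∃ R, R = {q ∈ A ×ˢ A | q.1 = m * q.2} := ⟨_, rfl⟩
  have hcube : quotientCount A m ^ 3 = #(R ×ˢ R ×ˢ R) := by
    rw [card_product, card_product, hR]
    exact (pow_succ' _ 2).trans (by rw [sq]; rfl)
  rw [hcube]
  refine card_le_card_of_injOn
    (fun t => ((t.1, t.2.2.2.1), (t.2.1, t.2.2.2.2.1), (t.2.2.1, t.2.2.2.2.2))) ?_ ?_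
  · rintro ⟨x₁, x₂, x₃, y₁, y₂, y₃⟩ ht
    simp only [coe_filter, mem_filter, mem_product, Set.mem_ofPred_eq] at ht
    obtain ⟨⟨⟨hx₁, hx₂, hx₃, hy₁, hy₂, hy₃⟩, h₁₂, h₂₃⟩, hm⟩ := ht
    have hy₁₀ : y₁ ≠ 0 := ne_of_mem_of_not_mem hy₁ hA
    have hy₂₀ : y₂ ≠ 0 := ne_of_mem_of_not_mem hy₂ hA
    have h₁ : x₁ = m * y₁ := (div_eq_iff hy₁₀).1 hm
    have h₂ : x₂ = m * y₂ := mul_right_cancel₀ hy₁₀ (by rw [← h₁₂, h₁, mul_right_comm])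
    have h₃ : x₃ = m * y₃ := mul_right_cancel₀ hy₂₀ (by rw [← h₂₃, h₂, mul_right_comm])
    simp only [hR, mem_coe, mem_product, mem_filter]
    exact ⟨⟨⟨hx₁, hy₁⟩, h₁⟩, ⟨⟨hx₂, hy₂⟩, h₂⟩, ⟨hx₃, hy₃⟩, h₃⟩
  · rintro ⟨x₁, x₂, x₃, y₁, y₂, y₃⟩ _ ⟨x₁', x₂', x₃', y₁', y₂', y₃'⟩ _ h
    simp only [Prod.mk.injEq] at h ⊢
    tauto

end QuotientCount

section LevelSets

theorem four_mul_le_mul_of_le_sq {u a t p : ℝ} (hu : 0 ≤ u) (ha : 0 ≤ a) (ht : 0 ≤ t)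
    (hp : 0 ≤ p) (hut : 16 * u ^ 15 * a ≤ t ^ 2) (hap : a ^ 3 * u ≤ p ^ 2) :
    4 * (u ^ 8 * a ^ 2) ≤ t * p := by
  refine le_of_sq_le_sq ?_ (by positivity)
  calc (4 * (u ^ 8 * a ^ 2)) ^ 2 = 16 * u ^ 15 * a * (a ^ 3 * u) := by ring
    _ ≤ t ^ 2 * p ^ 2 := by gcongr
    _ = (t * p) ^ 2 := by ring

theorem exists_nat_mul_approx {u a t p : ℝ} (hu : 1 ≤ u) (ht₁ : 1 ≤ t) (hta : t ≤ a)
    (htp : 4 * (u ^ 8 * a ^ 2) ≤ t * p) :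
    ∃ x : ℕ, u ^ 4 * a ≤ x ∧ u ^ 5 * a ^ 2 ≤ x * t ∧ x * t ≤ 2 * (u ^ 5 * a ^ 2) ∧ 2 * x ≤ p := by
  have ht : 0 < t := zero_lt_one.trans_le ht₁
  have ha : 0 < a := ht.trans_le hta
  have hlow : u ^ 4 * a ≤ u ^ 5 * a ^ 2 / t := by
    rw [le_div_iff₀ ht]
    calc u ^ 4 * a * t ≤ u ^ 5 * a * a := by gcongr; norm_num
      _ = u ^ 5 * a ^ 2 := by ring
  have hceil : (⌈u ^ 5 * a ^ 2 / t⌉₊ : ℝ) * t ≤ 2 * (u ^ 5 * a ^ 2) := by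
    have hlt := Nat.ceil_lt_add_one (a := u ^ 5 * a ^ 2 / t) (by positivity)
    calc (⌈u ^ 5 * a ^ 2 / t⌉₊ : ℝ) * t ≤ (u ^ 5 * a ^ 2 / t + 1) * t := by gcongr
      _ = u ^ 5 * a ^ 2 + t := by field_simp
      _ ≤ 2 * (u ^ 5 * a ^ 2) := by
        have hta' : t ≤ u ^ 5 * a ^ 2 :=
          calc t ≤ a ^ 1 := by rwa [pow_one]
            _ ≤ a ^ 2 := pow_le_pow_right₀ (ht₁.trans hta) one_le_two
            _ ≤ u ^ 5 * a ^ 2 := le_mul_of_one_le_left (by positivity) (one_le_pow₀ hu)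
        linarith
  refine ⟨⌈u ^ 5 * a ^ 2 / t⌉₊, hlow.trans (Nat.le_ceil _), ?_, hceil, ?_⟩
  · exact (div_le_iff₀ ht).1 (Nat.le_ceil _)
  · refine le_of_mul_le_mul_right ?_ ht
    calc 2 * (⌈u ^ 5 * a ^ 2 / t⌉₊ : ℝ) * t ≤ 4 * (u ^ 5 * a ^ 2) := by linarith
      _ ≤ 4 * (u ^ 8 * a ^ 2) := by gcongr; norm_num
      _ ≤ p * t := by linarith

theorem mul_pow_three_le_of_rich_bound {u a t ν x : ℝ} (hu : 1 ≤ u) (ht : 0 < t) (hta : t ≤ a)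
    (hν : 0 ≤ ν) (hνa : ν ≤ a ^ 3) (hxt : u ^ 5 * a ^ 2 ≤ x * t)
    (h : ν * x * t ^ 4 ≤ 1500000 ^ 2 * (u ^ 4 * a) ^ 5 ∨
      ν * t ^ 2 ≤ 1500000 * (u ^ 4 * a) ^ 2 ∨ x * t ^ 2 ≤ 1500000 * (u ^ 4 * a) ^ 2) :
    ν * t ^ 3 ≤ 1500000 ^ 3 * (u ^ 15 * a ^ 3) := by
  have ha : 0 < a := ht.trans_le hta
  have hpos : 0 < u ^ 5 * a ^ 2 := by positivity
  obtain h | h | h := h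
  · refine le_of_mul_le_mul_right ?_ hpos
    calc ν * t ^ 3 * (u ^ 5 * a ^ 2) ≤ ν * t ^ 3 * (x * t) := by gcongr
      _ = ν * x * t ^ 4 := by ring
      _ ≤ 1500000 ^ 2 * (u ^ 4 * a) ^ 5 := h
      _ = 1500000 ^ 2 * (u ^ 15 * a ^ 3) * (u ^ 5 * a ^ 2) := by ring
      _ ≤ 1500000 ^ 3 * (u ^ 15 * a ^ 3) * (u ^ 5 * a ^ 2) := by gcongr <;> norm_num
  · calc ν * t ^ 3 = ν * t ^ 2 * t := by ring
      _ ≤ 1500000 * (u ^ 4 * a) ^ 2 * a := by gcongr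
      _ = 1500000 * (u ^ 8 * a ^ 3) := by ring
      _ ≤ 1500000 ^ 3 * (u ^ 15 * a ^ 3) := by gcongr <;> norm_num
  · have htu : t ≤ 1500000 * u ^ 3 := by
      refine le_of_mul_le_mul_right ?_ hpos
      calc t * (u ^ 5 * a ^ 2) ≤ t * (x * t) := by gcongr
        _ = x * t ^ 2 := by ring
        _ ≤ 1500000 * (u ^ 4 * a) ^ 2 := h
        _ = 1500000 * u ^ 3 * (u ^ 5 * a ^ 2) := by ring
    calc ν * t ^ 3 ≤ a ^ 3 * (1500000 * u ^ 3) ^ 3 := by gcongr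
      _ = 1500000 ^ 3 * (u ^ 9 * a ^ 3) := by ring
      _ ≤ 1500000 ^ 3 * (u ^ 15 * a ^ 3) := by gcongr; norm_num

theorem mul_pow_three_le_of_mul_pow_three_le {u a t ν x : ℝ} (ha : 0 < a) (ht : 0 ≤ t) (hx : 0 ≤ x)
    (hxt : x * t ≤ 2 * (u ^ 5 * a ^ 2)) (h : ν * a ^ 3 ≤ 1500000 ^ 3 * x ^ 3) :
    ν * t ^ 3 ≤ 8 * 1500000 ^ 3 * (u ^ 15 * a ^ 3) := by
  refine le_of_mul_le_mul_right ?_ (by positivity : 0 < a ^ 3)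
  calc ν * t ^ 3 * a ^ 3 = ν * a ^ 3 * t ^ 3 := by ring
    _ ≤ 1500000 ^ 3 * x ^ 3 * t ^ 3 := by gcongr
    _ = 1500000 ^ 3 * (x * t) ^ 3 := by ring
    _ ≤ 1500000 ^ 3 * (2 * (u ^ 5 * a ^ 2)) ^ 3 := by gcongr
    _ = 8 * 1500000 ^ 3 * (u ^ 15 * a ^ 3) * a ^ 3 := by ring

theorem card_filter_le_quotientCount_mul_pow_three_le {p : ℕ} [Fact p.Prime] {A : Finset (ZMod p)}
    (hA : 0 ∉ A) {u : ℝ} (hu : 1 ≤ u) (hAu : (#(A + A) : ℝ) = u ^ 4 * #A)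
    (hAp : (#A : ℝ) ^ 3 * u ≤ (p : ℝ) ^ 2) {t : ℕ} (ht : 1 ≤ t) (htA : t ≤ #A)
    (hut : 16 * u ^ 15 * #A ≤ (t : ℝ) ^ 2) :
    (#{m | t ≤ quotientCount A m} * t ^ 3 : ℝ) ≤ 9 * 1500000 ^ 3 * (u ^ 15 * #A ^ 3) := by
  have hA₁ : 1 ≤ #A := ht.trans htA
  have htp : 4 * (u ^ 8 * #A ^ 2) ≤ (t * p : ℝ) :=
    four_mul_le_mul_of_le_sq (by positivity) (by positivity) (by positivity) (by positivity) hut hAp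
  obtain ⟨x, hAAx, hxt, hxt', hxp⟩ :=
    exists_nat_mul_approx hu (mod_cast ht) (by exact_mod_cast htA) htp
  rw [← hAu] at hAAx
  obtain ⟨Λ, hΛ⟩ : ∃ Λ, Λ = ({m | t ≤ quotientCount A m} : Finset (ZMod p)) :=
    ⟨_, rfl⟩
  have hΛA : #Λ ≤ #A ^ 3 := by
    rw [hΛ]
    exact (card_filter_le_quotientCount_le hA ht).trans (pow_le_pow_right₀ hA₁ (by norm_num))
  have hsmall : (#{m ∈ Λ | ¬x ≤ #(A - m • A)} * t ^ 3 : ℝ) ≤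
      8 * 1500000 ^ 3 * (u ^ 15 * #A ^ 3) :=
    mul_pow_three_le_of_mul_pow_three_le (mod_cast hA₁) (by positivity) (by positivity) hxt' <|
      rich_bound_of_card_sub_le (fun m hm => (not_le.1 (mem_filter.1 hm).2).le)
        ((card_le_card_add_left (card_pos.1 hA₁)).trans (mod_cast hAAx)) (mod_cast hxp)
        ((card_filter_le _ _).trans hΛA)
  have hlarge : (#{m ∈ Λ | x ≤ #(A - m • A)} * t ^ 3 : ℝ) ≤ 1500000 ^ 3 * (u ^ 15 * #A ^ 3) := by
    refine mul_pow_three_le_of_rich_bound hu (mod_cast ht) (mod_cast htA) (by positivity)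
      (mod_cast (card_filter_le _ _).trans hΛA) hxt ?_
    rw [← hAu]
    refine rich_bound_of_le_quotientCount (fun m hm => ?_) (fun m hm => (mem_filter.1 hm).2)
      (mod_cast hAAx) ?_
    · simp only [hΛ, mem_filter] at hm
      exact hm.1.2
    · calc 2 * (#(A + A) : ℝ) ^ 2 = 2 * (u ^ 8 * #A ^ 2) := by rw [hAu]; ring
        _ ≤ 4 * (u ^ 8 * #A ^ 2) := by gcongr; norm_num
        _ ≤ t * p := htp
  rw [← hΛ, ← card_filter_add_card_filter_not (s := Λ) fun m => x ≤ #(A - m • A)]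
  push_cast
  linarith

end LevelSets

section LayerCake

theorem pow_three_le_sum_range (r : ℕ) : (r : ℝ) ^ 3 ≤ ∑ t ∈ range r, 3 * ((t : ℝ) + 1) ^ 2 := by
  induction r with
  | zero => simp
  | succ n ih =>
    rw [sum_range_succ]
    push_cast
    linarith [n.cast_nonneg (α := ℝ)]

theorem pow_three_le_add_sum {r a : ℕ} (hra : r ≤ a) {W : ℝ} (hW : 0 ≤ W) :
    (r : ℝ) ^ 3 ≤ 3 * W * r +
      ∑ t ∈ range a with W ≤ (t + 1 : ℕ) ^ 2 ∧ t + 1 ≤ r, 3 * ((t : ℝ) + 1) ^ 2 := by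
  refine (pow_three_le_sum_range r).trans ?_
  rw [← sum_filter_not_add_sum_filter (range r) fun t => W ≤ (t + 1 : ℕ) ^ 2]
  refine add_le_add ?_ (sum_le_sum_of_subset_of_nonneg ?_ fun t _ _ => by positivity)
  · calc ∑ t ∈ range r with ¬W ≤ (t + 1 : ℕ) ^ 2, 3 * ((t : ℝ) + 1) ^ 2
        ≤ ∑ t ∈ range r with ¬W ≤ (t + 1 : ℕ) ^ 2, 3 * W := by
          gcongr with t ht
          exact_mod_cast (not_le.1 (mem_filter.1 ht).2).le
      _ ≤ ∑ t ∈ range r, 3 * W :=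
        sum_le_sum_of_subset_of_nonneg (filter_subset _ _) fun _ _ _ => by positivity
      _ = 3 * W * r := by rw [sum_const, card_range, nsmul_eq_mul, mul_comm]
  · intro t
    simp only [mem_filter, mem_range]
    exact fun ⟨htr, hWt⟩ => ⟨htr.trans_le hra, hWt, htr⟩

theorem sum_pow_three_le_of_card_mul_pow_three_le {ι : Type*} {s : Finset ι} {r : ι → ℕ} {a : ℕ}
    {W K : ℝ} (hra : ∀ i ∈ s, r i ≤ a) (hW : 0 ≤ W) (hK : 0 ≤ K)
    (hlevel : ∀ t : ℕ, 1 ≤ t → t ≤ a → W ≤ (t : ℝ) ^ 2 → (#{i ∈ s | t ≤ r i} * t ^ 3 : ℝ) ≤ K) :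
    (∑ i ∈ s, r i ^ 3 : ℝ) ≤ 3 * W * ∑ i ∈ s, (r i : ℝ) + 3 * K * (1 + Real.log a) := by
  have hharmonic : ∑ t ∈ range a, ((t : ℝ) + 1)⁻¹ ≤ 1 + Real.log a := by
    simpa [harmonic] using harmonic_le_one_add_log a
  have hterm : ∀ t ∈ range a, W ≤ (t + 1 : ℕ) ^ 2 →
      #{i ∈ s | t + 1 ≤ r i} * (3 * ((t : ℝ) + 1) ^ 2) ≤ 3 * K * ((t : ℝ) + 1)⁻¹ := by
    intro t hta hWt
    have h := hlevel (t + 1) (by omega) (mem_range.1 hta) hWt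
    push_cast at h
    rw [← div_eq_mul_inv, le_div_iff₀ (by positivity)]
    linarith
  calc (∑ i ∈ s, r i ^ 3 : ℝ) ≤ ∑ i ∈ s, (3 * W * r i +
        ∑ t ∈ range a with W ≤ (t + 1 : ℕ) ^ 2 ∧ t + 1 ≤ r i, 3 * ((t : ℝ) + 1) ^ 2) :=
        sum_le_sum fun i hi => pow_three_le_add_sum (hra i hi) hW
    _ = 3 * W * ∑ i ∈ s, (r i : ℝ) + ∑ t ∈ range a with W ≤ (t + 1 : ℕ) ^ 2,
        ∑ i ∈ s with t + 1 ≤ r i, 3 * ((t : ℝ) + 1) ^ 2 := by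
        rw [sum_add_distrib, mul_sum]
        congr 1
        refine sum_comm' fun i t => ?_
        simp only [mem_filter]
        tauto
    _ ≤ 3 * W * ∑ i ∈ s, (r i : ℝ) +
        ∑ t ∈ range a with W ≤ (t + 1 : ℕ) ^ 2, 3 * K * ((t : ℝ) + 1)⁻¹ := by
        gcongr with t ht
        rw [sum_const, nsmul_eq_mul]
        exact hterm t (mem_filter.1 ht).1 (mem_filter.1 ht).2
    _ ≤ 3 * W * ∑ i ∈ s, (r i : ℝ) + 3 * K * ∑ t ∈ range a, ((t : ℝ) + 1)⁻¹ := by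
        rw [← mul_sum]
        gcongr
        exact filter_subset _ _
    _ ≤ 3 * W * ∑ i ∈ s, (r i : ℝ) + 3 * K * (1 + Real.log a) := by gcongr

end LayerCake

section ThirdEnergy

theorem sum_quotientCount_pow_three_le {p : ℕ} [Fact p.Prime] {A : Finset (ZMod p)}
    (hA : 0 ∉ A) {u : ℝ} (hu : 1 ≤ u) (hAu : (#(A + A) : ℝ) = u ^ 4 * #A)
    (hAp : (#A : ℝ) ^ 3 * u ≤ (p : ℝ) ^ 2) (hA₂ : 2 ≤ #A) :
    (∑ m, quotientCount A m ^ 3 : ℝ) ≤ 10 ^ 21 * (u ^ 15 * #A ^ 3) * Real.log #A := by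
  have hlog : 0.69 ≤ Real.log #A :=
    (by linarith [Real.log_two_gt_d9] : 0.69 ≤ Real.log 2).trans <|
      Real.log_le_log two_pos (mod_cast hA₂)
  have hsum : (∑ m, quotientCount A m : ℝ) = #A ^ 2 := mod_cast sum_quotientCount hA
  calc (∑ m, quotientCount A m ^ 3 : ℝ)
      ≤ 3 * (16 * u ^ 15 * #A) * ∑ m, (quotientCount A m : ℝ) +
        3 * (9 * 1500000 ^ 3 * (u ^ 15 * #A ^ 3)) * (1 + Real.log #A) :=
        sum_pow_three_le_of_card_mul_pow_three_le (fun m _ => quotientCount_le_card A m)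
          (by positivity) (by positivity) fun _ =>
            card_filter_le_quotientCount_mul_pow_three_le hA hu hAu hAp
    _ = (48 + 27 * 1500000 ^ 3 * (1 + Real.log #A)) * (u ^ 15 * #A ^ 3) := by rw [hsum]; ring
    _ ≤ 10 ^ 21 * Real.log #A * (u ^ 15 * #A ^ 3) := by gcongr; linarith
    _ = 10 ^ 21 * (u ^ 15 * #A ^ 3) * Real.log #A := by ring

theorem exists_pow_four_mul_eq {n a : ℝ} (ha : 0 < a) (han : a ≤ n) :
    ∃ u, 1 ≤ u ∧ n = u ^ 4 * a ∧ u ^ 15 * a ^ 3 = n ^ (15 / 4 : ℝ) * a ^ (-3 / 4 : ℝ) := by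
  have hn : 0 < n := ha.trans_le han
  have hpow (k : ℕ) : ((n / a) ^ (1 / 4 : ℝ)) ^ k = (n / a) ^ (k / 4 : ℝ) := by
    rw [← Real.rpow_mul_natCast (by positivity), one_div_mul_eq_div]
  refine ⟨(n / a) ^ (1 / 4 : ℝ), ?_, ?_, ?_⟩
  · exact Real.one_le_rpow ((one_le_div ha).2 han) (by norm_num)
  · rw [hpow, Nat.cast_ofNat, div_self four_ne_zero, Real.rpow_one, div_mul_cancel₀ _ ha.ne']
  · rw [hpow, Real.div_rpow hn.le ha.le, div_mul_eq_mul_div, mul_div_assoc, ← Real.rpow_natCast a,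
      ← Real.rpow_sub ha]
    norm_num

end ThirdEnergy

theorem stmt_16 :
    ∃ C : ℝ, 0 < C ∧
      ∀ (p : ℕ), p.Prime →
        ∀ A : Finset (ZMod p), (0 : ZMod p) ∉ A → 2 ≤ A.card →
          (A.card : ℝ) ^ 11 * ((A + A).card : ℝ) ≤ (p : ℝ) ^ 8 →
          (((A ×ˢ A ×ˢ A ×ˢ A ×ˢ A ×ˢ A).filter
              (fun t : ZMod p × ZMod p × ZMod p × ZMod p × ZMod p × ZMod p =>
                t.1 * t.2.2.2.2.1 = t.2.1 * t.2.2.2.1 ∧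
                t.2.1 * t.2.2.2.2.2 = t.2.2.1 * t.2.2.2.2.1)).card : ℝ)
            ≤ C * ((A + A).card : ℝ) ^ ((15 : ℝ) / 4) * (A.card : ℝ) ^ (-(3 : ℝ) / 4) *
                Real.log A.card := by
  refine ⟨10 ^ 21, by positivity, fun p hp A hA hA₂ hcard => ?_⟩
  have : Fact p.Prime := ⟨hp⟩
  have hA₀ : 0 < #A := by omega
  obtain ⟨u, hu, hAu, hbound⟩ := exists_pow_four_mul_eq (n := #(A + A)) (a := #A) (mod_cast hA₀)
    (mod_cast card_le_card_add_left (card_pos.1 hA₀))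
  have hAp : (#A : ℝ) ^ 3 * u ≤ (p : ℝ) ^ 2 := by
    refine le_of_pow_le_pow_left₀ four_ne_zero (by positivity) ?_
    calc ((#A : ℝ) ^ 3 * u) ^ 4 = (#A : ℝ) ^ 11 * (u ^ 4 * #A) := by ring
      _ = (#A : ℝ) ^ 11 * #(A + A) := by rw [hAu]
      _ ≤ (p : ℝ) ^ 8 := hcard
      _ = ((p : ℝ) ^ 2) ^ 4 := by ring
  rw [mul_assoc (10 ^ 21), ← hbound]
  exact le_trans (mod_cast card_filter_equal_quotients_le hA)
    (sum_quotientCount_pow_three_le hA hu hAu hAp hA₂)
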